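/- arXiv:1305.2669 — 2 statements merged into one kernel-verified Lean document; each statement's English description precedes it below -/
import Mathlib

section
/- Let n ≥ 3, let Ω ⊂ ℝⁿ be a bounded open convex domain, and let u be a function of class C⁴ on a neighborhood of the closure of Ω that is strictly convex (its Hessian D²u is positive definite) and satisfies det D²u = 1 in Ω together with u = 0 on ∂Ω. If the function ψ = Σ_{k,l=1}^n b^{kl} u_k u_l − 2(n−1)u, with b^{kl} = (Δu) δ_{kl} − u_{kl}, attains its maximum over the closure of Ω at an interior point of Ω, then there exist a point x₀ ∈ ℝⁿ and a constant r > 0 such that u(x) = (1/2)(|x − x₀|² − r²) for all x ∈ Ω, and Ω is the open ball of radius r centered at x₀. -/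
/-!
The operator `L = u^{ij} ∂_i ∂_j`, with `(u^{ij})` the inverse Hessian, satisfies
`Lψ = (L b^{kl}) u_k u_l + 4σ₂ - 2n(n-1)`: here `L u = n`, `L u_k = 0`, `L(u_k u_l) = 2u_{kl}`,
and the cross terms `4 ∂_k b^{kl} u_l` vanish because `(b^{kl})` is divergence free (`ellOp_psi`).

The form `Q_{kl} = u^{ij} u_{ijkl}` is nonnegative: by AM-GM, `tr(D²u(p)⁻¹ D²u(y))` is at least
`n` when both determinants are `1`, so as a function of `y` it is minimal at `y = p`, and `Q` is its
Hessian there. Therefore `(L b^{kl}) u_k u_l = |∇u|² tr Q - Q(∇u, ∇u) ≥ 0`, and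
`Lψ ≥ 4σ₂ - 2n(n-1)` (`ellOp_psi_ge`). Maclaurin's inequality `σ₂ ≥ n(n-1)/2` gives `Lψ ≥ 0`,
and for `n ≥ 3` equality in it forces `D²u = I` (`sigma_two_ge`, `eq_one_of_sigma_two_le`).

At an interior maximum `Lψ ≤ 0`, so `D²u = I` at every interior maximum point. The strong maximum
principle (`strong_max`) makes `ψ` constant, so `D²u = I` throughout `Ω`, `u` is a paraboloid
(`exists_paraboloid`), and the boundary condition puts `∂Ω` on a sphere (`eq_ball_of_frontier`).
-/

open scoped BigOperators

/-- First partial derivative in direction `i`. -/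
noncomputable def pd {n : ℕ} (i : Fin n) (f : EuclideanSpace ℝ (Fin n) → ℝ) :
    EuclideanSpace ℝ (Fin n) → ℝ :=
  fun x => fderiv ℝ f x (EuclideanSpace.single i 1)

/-- The Hessian matrix `(u_{ij})` of `u` at `x`. -/
noncomputable def hess {n : ℕ} (u : EuclideanSpace ℝ (Fin n) → ℝ)
    (x : EuclideanSpace ℝ (Fin n)) : Matrix (Fin n) (Fin n) ℝ :=
  Matrix.of fun i j => pd i (pd j u) x

/-- `b^{kl} = (Δu) δ_{kl} − u_{kl} = ∂σ₂(D²u)/∂u_{kl}`. -/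
noncomputable def bMat {n : ℕ} (u : EuclideanSpace ℝ (Fin n) → ℝ)
    (x : EuclideanSpace ℝ (Fin n)) : Matrix (Fin n) (Fin n) ℝ :=
  (hess u x).trace • (1 : Matrix (Fin n) (Fin n) ℝ) - hess u x

/-- `ψ = Σ b^{kl} u_k u_l − 2(n−1)u`. -/
noncomputable def psiFn {n : ℕ} (u : EuclideanSpace ℝ (Fin n) → ℝ)
    (x : EuclideanSpace ℝ (Fin n)) : ℝ :=
  (∑ k, ∑ l, bMat u x k l * pd k u x * pd l u x) - 2 * ((n : ℝ) - 1) * u x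

section Aux

open Filter Topology

variable {n : ℕ}

/-! ### Calculus of partial derivatives -/

lemma pd_congr {f g : EuclideanSpace ℝ (Fin n) → ℝ} {x : EuclideanSpace ℝ (Fin n)}
    (h : f =ᶠ[𝓝 x] g) (i : Fin n) : pd i f =ᶠ[𝓝 x] pd i g := by
  filter_upwards [h.fderiv (𝕜 := ℝ)] with y hy
  simp only [pd, hy]

lemma pd_contDiffAt {f : EuclideanSpace ℝ (Fin n) → ℝ} {x : EuclideanSpace ℝ (Fin n)}
    {a b : WithTop ℕ∞} (h : ContDiffAt ℝ a f x) (hab : b + 1 ≤ a) (i : Fin n) :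
    ContDiffAt ℝ b (pd i f) x :=
  (h.fderiv_right hab).clm_apply contDiffAt_const

lemma pd_comm {f : EuclideanSpace ℝ (Fin n) → ℝ} {x : EuclideanSpace ℝ (Fin n)}
    (h : ContDiffAt ℝ 2 f x) (i j : Fin n) : pd i (pd j f) x = pd j (pd i f) x := by
  have hd : DifferentiableAt ℝ (fderiv ℝ f) x :=
    (h.fderiv_right (m := 1) (by norm_num)).differentiableAt (by norm_num)
  have hs := h.isSymmSndFDerivAt (by simp)
  have key : ∀ i j : Fin n, pd i (pd j f) x =
      fderiv ℝ (fderiv ℝ f) x (EuclideanSpace.single i 1) (EuclideanSpace.single j 1) := by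
    intro i j
    unfold pd
    rw [fderiv_clm_apply hd (by fun_prop)]
    simp
  rw [key, key]
  exact hs _ _

lemma pd_add {f g : EuclideanSpace ℝ (Fin n) → ℝ} {x : EuclideanSpace ℝ (Fin n)}
    (hf : DifferentiableAt ℝ f x) (hg : DifferentiableAt ℝ g x) (i : Fin n) :
    pd i (fun y => f y + g y) x = pd i f x + pd i g x := by
  simp [pd, fderiv_fun_add hf hg]

lemma pd_const_mul {f : EuclideanSpace ℝ (Fin n) → ℝ} {x : EuclideanSpace ℝ (Fin n)}
    (hf : DifferentiableAt ℝ f x) (c : ℝ) (i : Fin n) :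
    pd i (fun y => c * f y) x = c * pd i f x := by
  simp [pd, fderiv_const_mul hf c]

lemma pd_mul {f g : EuclideanSpace ℝ (Fin n) → ℝ} {x : EuclideanSpace ℝ (Fin n)}
    (hf : DifferentiableAt ℝ f x) (hg : DifferentiableAt ℝ g x) (i : Fin n) :
    pd i (fun y => f y * g y) x = pd i f x * g x + f x * pd i g x := by
  simp [pd, fderiv_fun_mul hf hg]; ring

lemma pd_sum {ι : Type*} (s : Finset ι) {f : ι → EuclideanSpace ℝ (Fin n) → ℝ}
    {x : EuclideanSpace ℝ (Fin n)}
    (hf : ∀ a ∈ s, DifferentiableAt ℝ (f a) x) (i : Fin n) :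
    pd i (fun y => ∑ a ∈ s, f a y) x = ∑ a ∈ s, pd i (f a) x := by
  simp [pd, fderiv_fun_sum hf]

lemma ContDiffAt.diff2 {f : EuclideanSpace ℝ (Fin n) → ℝ} {x : EuclideanSpace ℝ (Fin n)}
    (hf : ContDiffAt ℝ 2 f x) : ∀ᶠ y in 𝓝 x, DifferentiableAt ℝ f y := by
  filter_upwards [hf.eventually (by decide)] with y hy
  exact hy.differentiableAt (by norm_num)

lemma ContDiffAt.pd_diff {f : EuclideanSpace ℝ (Fin n) → ℝ} {x : EuclideanSpace ℝ (Fin n)}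
    (hf : ContDiffAt ℝ 2 f x) (i : Fin n) : DifferentiableAt ℝ (pd i f) x :=
  (pd_contDiffAt (b := 1) hf (by norm_num) i).differentiableAt (by norm_num)

lemma pd2_add {f g : EuclideanSpace ℝ (Fin n) → ℝ} {x : EuclideanSpace ℝ (Fin n)}
    (hf : ContDiffAt ℝ 2 f x) (hg : ContDiffAt ℝ 2 g x) (i j : Fin n) :
    pd i (pd j (fun y => f y + g y)) x = pd i (pd j f) x + pd i (pd j g) x := by
  have h : pd j (fun y => f y + g y) =ᶠ[𝓝 x] fun y => pd j f y + pd j g y := by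
    filter_upwards [hf.diff2, hg.diff2] with y h1 h2 using pd_add h1 h2 j
  rw [(pd_congr h i).eq_of_nhds, pd_add (hf.pd_diff j) (hg.pd_diff j)]

lemma pd2_const_mul {f : EuclideanSpace ℝ (Fin n) → ℝ} {x : EuclideanSpace ℝ (Fin n)}
    (hf : ContDiffAt ℝ 2 f x) (c : ℝ) (i j : Fin n) :
    pd i (pd j (fun y => c * f y)) x = c * pd i (pd j f) x := by
  have h : pd j (fun y => c * f y) =ᶠ[𝓝 x] fun y => c * pd j f y := by
    filter_upwards [hf.diff2] with y h1 using pd_const_mul h1 c j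
  rw [(pd_congr h i).eq_of_nhds, pd_const_mul (hf.pd_diff j)]

lemma pd2_sum {ι : Type*} (s : Finset ι) {f : ι → EuclideanSpace ℝ (Fin n) → ℝ}
    {x : EuclideanSpace ℝ (Fin n)}
    (hf : ∀ a ∈ s, ContDiffAt ℝ 2 (f a) x) (i j : Fin n) :
    pd i (pd j (fun y => ∑ a ∈ s, f a y)) x = ∑ a ∈ s, pd i (pd j (f a)) x := by
  have h : pd j (fun y => ∑ a ∈ s, f a y) =ᶠ[𝓝 x] fun y => ∑ a ∈ s, pd j (f a) y := by
    have : ∀ᶠ y in 𝓝 x, ∀ a ∈ s, DifferentiableAt ℝ (f a) y :=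
      (Filter.eventually_all_finset s).2 fun a ha => (hf a ha).diff2
    filter_upwards [this] with y h1 using pd_sum s h1 j
  rw [(pd_congr h i).eq_of_nhds, pd_sum s fun a ha => (hf a ha).pd_diff j]

lemma pd2_mul {f g : EuclideanSpace ℝ (Fin n) → ℝ} {x : EuclideanSpace ℝ (Fin n)}
    (hf : ContDiffAt ℝ 2 f x) (hg : ContDiffAt ℝ 2 g x) (i j : Fin n) :
    pd i (pd j (fun y => f y * g y)) x = pd i (pd j f) x * g x + pd j f x * pd i g x
      + pd i f x * pd j g x + f x * pd i (pd j g) x := by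
  have h : pd j (fun y => f y * g y) =ᶠ[𝓝 x] fun y => pd j f y * g y + f y * pd j g y := by
    filter_upwards [hf.diff2, hg.diff2] with y h1 h2 using pd_mul h1 h2 j
  have hf1 := hf.diff2.self_of_nhds
  have hg1 := hg.diff2.self_of_nhds
  rw [(pd_congr h i).eq_of_nhds, pd_add ((hf.pd_diff j).fun_mul hg1) (hf1.fun_mul (hg.pd_diff j)),
    pd_mul (hf.pd_diff j) hg1, pd_mul hf1 (hg.pd_diff j)]
  ring

/-- The directional derivative along `v` is the corresponding combination of the `pd i`. -/
lemma fderiv_eq_sum_pd (f : EuclideanSpace ℝ (Fin n) → ℝ) (x v : EuclideanSpace ℝ (Fin n)) :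
    fderiv ℝ f x v = ∑ i, v i * pd i f x := by
  conv_lhs => rw [← (EuclideanSpace.basisFun (Fin n) ℝ).sum_repr v]
  simp [pd]

/-- Second-order necessary condition: the Hessian quadratic form is nonnegative at a local
minimum. -/
lemma quadForm_nonneg_of_isLocalMin {f : EuclideanSpace ℝ (Fin n) → ℝ}
    {x : EuclideanSpace ℝ (Fin n)} (hf : ContDiffAt ℝ 2 f x) (hm : IsLocalMin f x)
    (v : EuclideanSpace ℝ (Fin n)) :
    0 ≤ ∑ k, ∑ l, v k * v l * pd k (pd l f) x := by
  by_contra! hneg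
  set γ : ℝ → EuclideanSpace ℝ (Fin n) := fun t => x + t • v with hγ
  have hγ0 : γ 0 = x := by simp [hγ]
  have hγd : ∀ t, HasDerivAt γ v t := fun t => by
    have := ((hasDerivAt_id t).smul_const v).const_add x
    rw [one_smul] at this
    exact this
  have hγc : Tendsto γ (𝓝 0) (𝓝 x) := by
    have := (hγd 0).continuousAt.tendsto
    rwa [hγ0] at this
  have hchain : ∀ (F : EuclideanSpace ℝ (Fin n) → ℝ) (t : ℝ), DifferentiableAt ℝ F (γ t) →
      HasDerivAt (F ∘ γ) (∑ i, v i * pd i F (γ t)) t := fun F t hF => by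
    have := hF.hasFDerivAt.comp_hasDerivAt t (hγd t)
    rwa [fderiv_eq_sum_pd] at this
  have hd1 : deriv (f ∘ γ) =ᶠ[𝓝 0] fun t => ∑ l, v l * pd l f (γ t) := by
    filter_upwards [hγc.eventually hf.diff2] with t ht using (hchain f t ht).deriv
  have hd2 : deriv (deriv (f ∘ γ)) 0 = ∑ k, ∑ l, v k * v l * pd k (pd l f) x := by
    have hF : DifferentiableAt ℝ (fun y => ∑ l, v l * pd l f y) (γ 0) := by
      rw [hγ0]
      exact DifferentiableAt.fun_sum fun l _ => (hf.pd_diff l).const_mul _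
    have := (hchain (fun y => ∑ l, v l * pd l f y) 0 hF).deriv
    rw [hd1.deriv_eq]
    refine Eq.trans this ?_
    rw [hγ0]
    refine Finset.sum_congr rfl fun k _ => ?_
    rw [pd_sum _ fun l _ => (hf.pd_diff l).const_mul _, Finset.mul_sum]
    refine Finset.sum_congr rfl fun l _ => ?_
    rw [pd_const_mul (hf.pd_diff l)]
    ring
  have hmin : IsLocalMin (f ∘ γ) 0 := by
    have : ∀ᶠ t in 𝓝 (0 : ℝ), f x ≤ f (γ t) := hγc.eventually hm
    filter_upwards [this] with t ht
    simpa [hγ0] using ht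
  have hcont : ContinuousAt (f ∘ γ) 0 := by
    refine ContinuousAt.comp ?_ (hγd 0).continuousAt
    rw [hγ0]; exact hf.continuousAt
  have hmax : IsLocalMax (f ∘ γ) 0 :=
    isLocalMax_of_deriv_deriv_neg (by rw [hd2]; exact hneg) hmin.deriv_eq_zero hcont
  -- `f ∘ γ` has both a local minimum and a local maximum at `0`, so it is locally constant.
  have hconst : (f ∘ γ) =ᶠ[𝓝 0] fun _ => (f ∘ γ) 0 := by
    filter_upwards [hmin, hmax] with t h1 h2 using le_antisymm h2 h1
  have : deriv (deriv (f ∘ γ)) 0 = 0 := by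
    rw [hconst.deriv.deriv_eq]
    simp
  linarith [hd2]

lemma pd_eq_zero_of_isLocalMin {f : EuclideanSpace ℝ (Fin n) → ℝ}
    {x : EuclideanSpace ℝ (Fin n)} (hm : IsLocalMin f x) (i : Fin n) : pd i f x = 0 := by
  simp [pd, hm.fderiv_eq_zero]

/-! ### Matrix inequalities -/

open scoped MatrixOrder Matrix.Norms.L2Operator in
lemma exists_eq_conjTranspose_mul_self {C : Matrix (Fin n) (Fin n) ℝ} (hC : C.PosSemidef) :
    ∃ S : Matrix (Fin n) (Fin n) ℝ, C = S.conjTranspose * S :=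
  CStarAlgebra.nonneg_iff_eq_star_mul_self.mp hC.nonneg

lemma log_sum_zero {l : Fin n → ℝ} (hl : ∀ i, 0 < l i) (hp : ∏ i, l i = 1) :
    ∑ i, Real.log (l i) = 0 := by
  rw [← Real.log_prod (fun i _ => (hl i).ne'), hp, Real.log_one]

/-- AM-GM for the eigenvalues. -/
lemma trace_ge_of_det_one {A : Matrix (Fin n) (Fin n) ℝ} (hA : A.PosDef) (hd : A.det = 1) :
    (n : ℝ) ≤ A.trace := by
  have hl := hA.eigenvalues_pos
  have hp : ∏ i, hA.isHermitian.eigenvalues i = 1 := by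
    have := hA.isHermitian.det_eq_prod_eigenvalues
    rw [hd] at this
    exact_mod_cast this.symm
  have ht : A.trace = ∑ i, hA.isHermitian.eigenvalues i := by
    simpa using hA.isHermitian.trace_eq_sum_eigenvalues
  have h1 : ∑ i, (1 + Real.log (hA.isHermitian.eigenvalues i)) ≤
      ∑ i, hA.isHermitian.eigenvalues i :=
    Finset.sum_le_sum fun i _ => by linarith [Real.log_le_sub_one_of_pos (hl i)]
  rw [Finset.sum_add_distrib, log_sum_zero hl hp] at h1
  simp at h1
  rwa [ht]

/-- `tr(C B) ≥ n` for positive definite `C`, `B` of determinant one;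
this is AM-GM for `S B Sᵀ`, where `C = Sᵀ S`. -/
lemma trace_mul_ge {C B : Matrix (Fin n) (Fin n) ℝ} (hC : C.PosDef) (hB : B.PosDef)
    (hCd : C.det = 1) (hBd : B.det = 1) : (n : ℝ) ≤ (C * B).trace := by
  obtain ⟨S, hS⟩ := exists_eq_conjTranspose_mul_self hC.posSemidef
  have hdet : S.det * S.det = 1 := by
    rw [hS, Matrix.det_mul, Matrix.det_conjTranspose] at hCd
    simpa using hCd
  have hSu : IsUnit S := by
    rw [Matrix.isUnit_iff_isUnit_det]
    exact IsUnit.of_mul_eq_one _ hdet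
  have hP : (S * B * S.conjTranspose).PosDef := by
    refine hB.mul_mul_conjTranspose_same ?_
    exact Matrix.vecMul_injective_iff_isUnit.2 hSu
  have hPd : (S * B * S.conjTranspose).det = 1 := by
    rw [Matrix.det_mul, Matrix.det_mul, hBd, Matrix.det_conjTranspose]
    simpa using hdet
  have := trace_ge_of_det_one hP hPd
  rwa [Matrix.mul_assoc, Matrix.trace_mul_comm, Matrix.mul_assoc, Matrix.trace_mul_comm,
    ← hS] at this

/-- The trace of the product of two nonnegative forms is nonnegative. -/
lemma sum_mul_nonneg {C : Matrix (Fin n) (Fin n) ℝ} (hC : C.PosSemidef)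
    (Q : Fin n → Fin n → ℝ)
    (hQ : ∀ v : EuclideanSpace ℝ (Fin n), 0 ≤ ∑ k, ∑ l, v k * v l * Q k l) :
    0 ≤ ∑ k, ∑ l, C k l * Q k l := by
  obtain ⟨S, hS⟩ := exists_eq_conjTranspose_mul_self hC
  have : ∑ k, ∑ l, C k l * Q k l = ∑ m, ∑ k, ∑ l, S m k * S m l * Q k l := by
    symm
    rw [Finset.sum_comm]
    refine Finset.sum_congr rfl fun k _ => ?_
    rw [Finset.sum_comm]
    refine Finset.sum_congr rfl fun l _ => ?_
    rw [hS, Matrix.mul_apply, Finset.sum_mul]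
    simp
  rw [this]
  exact Finset.sum_nonneg fun m _ => by simpa using hQ (WithLp.toLp 2 (S m))

/-- For a nonnegative form `Q`, `Q(v,v) ≤ |v|² tr Q`: sum `Q(w,w) ≥ 0` over the vectors
`w = v_l e_k - v_k e_l`. -/
lemma trace_sub_nonneg {Q : Fin n → Fin n → ℝ} (hs : ∀ k l, Q k l = Q l k)
    (hQ : ∀ v : EuclideanSpace ℝ (Fin n), 0 ≤ ∑ k, ∑ l, v k * v l * Q k l) (v : Fin n → ℝ) :
    0 ≤ ∑ k, ∑ l, (Q k k * v l * v l - Q k l * v k * v l) := by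
  have h : ∀ k l, 0 ≤ Q k k * v l * v l + Q l l * v k * v k - 2 * (Q k l * v k * v l) := by
    intro k l
    have := hQ (v l • EuclideanSpace.single k 1 - v k • EuclideanSpace.single l 1)
    simp [sub_mul, mul_sub, Finset.sum_sub_distrib] at this
    rw [hs l k] at this
    linarith
  have h2 : 0 ≤ ∑ k, ∑ l, (Q k k * v l * v l + Q l l * v k * v k - 2 * (Q k l * v k * v l)) :=
    Finset.sum_nonneg fun k _ => Finset.sum_nonneg fun l _ => h k l
  have h3 : ∑ k, ∑ l, (Q l l * v k * v k) = ∑ k, ∑ l, (Q k k * v l * v l) := Finset.sum_comm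
  simp only [Finset.sum_sub_distrib, Finset.sum_add_distrib, ← Finset.mul_sum] at h2 h3 ⊢
  linarith

/-- `(tr H)² - tr H² = Σ_{i≠j} λ_i λ_j` over the eigenvalues `λ_i` of `H`; both sides are `2σ₂`. -/
lemma sigma_two_eigen {H : Matrix (Fin n) (Fin n) ℝ} (hH : H.IsHermitian) :
    ∑ k, ∑ l, (H k k * H l l - H k l * H k l) =
      ∑ k, ∑ l ∈ Finset.univ.erase k, hH.eigenvalues k * hH.eigenvalues l := by
  have ht : ∑ k, H k k = ∑ i, hH.eigenvalues i := by
    simpa [Matrix.trace] using hH.trace_eq_sum_eigenvalues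
  have hsym : ∀ k l, H k l = H l k := fun k l => by simpa using (hH.apply l k)
  have ht2 : ∑ k, ∑ l, H k l * H k l = ∑ i, hH.eigenvalues i * hH.eigenvalues i := by
    have h1 : ∑ k, ∑ l, H k l * H k l = (H * H).trace := by
      simp only [Matrix.trace, Matrix.diag, Matrix.mul_apply]
      exact Finset.sum_congr rfl fun k _ => Finset.sum_congr rfl fun l _ => by rw [hsym l k]
    rw [h1]
    conv_lhs => rw [hH.spectral_theorem]
    rw [← map_mul, Unitary.conjStarAlgAut_apply, Matrix.trace_mul_comm, ← mul_assoc]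
    simp [Matrix.diagonal_mul_diagonal, Matrix.trace_diagonal]
  simp only [Finset.sum_sub_distrib, ht2]
  have h4 : ∀ k, ∑ l ∈ Finset.univ.erase k, hH.eigenvalues k * hH.eigenvalues l =
      (∑ l, hH.eigenvalues k * hH.eigenvalues l) - hH.eigenvalues k * hH.eigenvalues k :=
    fun k => by
    rw [← Finset.add_sum_erase Finset.univ _ (Finset.mem_univ k)]; ring
  simp only [h4, Finset.sum_sub_distrib]
  rw [← Finset.sum_mul_sum, ← Finset.sum_mul_sum, ht]

lemma log_erase_sum {l : Fin n → ℝ} (hl : ∀ i, 0 < l i) (hp : ∏ i, l i = 1) :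
    ∑ k, ∑ j ∈ Finset.univ.erase k, (1 + Real.log (l k * l j)) = (n : ℝ) * (n - 1) := by
  have h0 := log_sum_zero hl hp
  have : ∀ k, ∑ j ∈ Finset.univ.erase k, (1 + Real.log (l k * l j)) =
      ((n : ℝ) - 1) + ((n : ℝ) - 2) * Real.log (l k) := fun k => by
    have e : ∀ j, 1 + Real.log (l k * l j) = (1 + Real.log (l k)) + Real.log (l j) := fun j => by
      rw [Real.log_mul (hl k).ne' (hl j).ne']; ring
    have := Finset.add_sum_erase Finset.univ (fun j => (1 + Real.log (l k)) + Real.log (l j))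
      (Finset.mem_univ k)
    rw [Finset.sum_add_distrib (s := Finset.univ), h0] at this
    simp only [e]
    simp at this ⊢
    linarith
  simp only [this, Finset.sum_add_distrib, ← Finset.mul_sum, h0]
  simp
  ring

/-- Maclaurin's inequality `σ₂ ≥ n(n-1)/2` under `det H = 1`, from `x ≥ 1 + log x` at
`x = λ_i λ_j`. -/
lemma sigma_two_ge {H : Matrix (Fin n) (Fin n) ℝ} (hH : H.PosDef) (hd : H.det = 1) :
    (n : ℝ) * (n - 1) ≤ ∑ k, ∑ l, (H k k * H l l - H k l * H k l) := by
  have hl := hH.eigenvalues_pos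
  have hp : ∏ i, hH.isHermitian.eigenvalues i = 1 := by
    have := hH.isHermitian.det_eq_prod_eigenvalues
    rw [hd] at this
    exact_mod_cast this.symm
  rw [sigma_two_eigen hH.isHermitian, ← log_erase_sum hl hp]
  exact Finset.sum_le_sum fun k _ => Finset.sum_le_sum fun l _ => by
    linarith [Real.log_le_sub_one_of_pos (mul_pos (hl k) (hl l))]

/-- Equality in Maclaurin's inequality gives `λ_i λ_j = 1` for `i ≠ j`; as there are at least
three eigenvalues, all are equal to `1`. -/
lemma eq_one_of_sigma_two_le (hn : 3 ≤ n) {H : Matrix (Fin n) (Fin n) ℝ} (hH : H.PosDef)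
    (hd : H.det = 1)
    (hle : ∑ k, ∑ l, (H k k * H l l - H k l * H k l) ≤ (n : ℝ) * (n - 1)) : H = 1 := by
  have hl := hH.eigenvalues_pos
  have hp : ∏ i, hH.isHermitian.eigenvalues i = 1 := by
    have := hH.isHermitian.det_eq_prod_eigenvalues
    rw [hd] at this
    exact_mod_cast this.symm
  rw [sigma_two_eigen hH.isHermitian, ← log_erase_sum hl hp] at hle
  set l := hH.isHermitian.eigenvalues with hldef
  have hpair : ∀ k j, j ≠ k → l k * l j = 1 := by
    intro k j hjk
    by_contra hne
    refine absurd hle (not_le.2 ?_)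
    have hge : ∀ k j, 1 + Real.log (l k * l j) ≤ l k * l j := fun k j => by
      linarith [Real.log_le_sub_one_of_pos (mul_pos (hl k) (hl j))]
    refine Finset.sum_lt_sum (fun k _ => Finset.sum_le_sum fun j _ => hge k j)
      ⟨k, Finset.mem_univ k, Finset.sum_lt_sum (fun j _ => hge k j)
        ⟨j, by simp [hjk], ?_⟩⟩
    linarith [Real.log_lt_sub_one_of_pos (mul_pos (hl k) (hl j)) hne]
  have hone : ∀ i, l i = 1 := by
    intro i
    obtain ⟨j, hj⟩ : ∃ j : Fin n, j ∉ ({i} : Finset (Fin n)) :=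
      Finset.exists_mem_notMem_of_card_lt_card (s := {i}) (t := Finset.univ) (by simp; omega)
        |>.imp fun _ h => h.2
    obtain ⟨k, hk⟩ : ∃ k : Fin n, k ∉ ({i, j} : Finset (Fin n)) :=
      Finset.exists_mem_notMem_of_card_lt_card (s := {i, j}) (t := Finset.univ)
        (lt_of_le_of_lt Finset.card_le_two (by simp; omega))
        |>.imp fun _ h => h.2
    simp only [Finset.mem_insert, Finset.mem_singleton, not_or] at hj hk
    have h1 := hpair i j hj
    have h2 := hpair i k hk.1
    have h3 := hpair j k hk.2
    have := hl i
    have hjk : l j = l k := mul_left_cancel₀ this.ne' (h1.trans h2.symm)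
    have hij : l i = l j := mul_right_cancel₀ (hl k).ne' (h2.trans h3.symm)
    rw [← hij] at h1
    nlinarith
  rw [hH.isHermitian.spectral_theorem]
  have : (Matrix.diagonal (RCLike.ofReal ∘ hH.isHermitian.eigenvalues) :
      Matrix (Fin n) (Fin n) ℝ) = 1 := by
    rw [← Matrix.diagonal_one]
    congr 1
    ext i
    simpa using hone i
  rw [this, map_one]

/-! ### The differential inequality for `ψ` -/

/-- The second-order operator `Σ C_{ij} ∂_i ∂_j`, evaluated at `x`. Variable coefficients `A` are
covered by taking `C = A x`, as no derivative falls on them. -/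
noncomputable def ellOp (C : Matrix (Fin n) (Fin n) ℝ) (f : EuclideanSpace ℝ (Fin n) → ℝ)
    (x : EuclideanSpace ℝ (Fin n)) : ℝ :=
  ∑ i, ∑ j, C i j * pd i (pd j f) x

lemma ellOp_add (C : Matrix (Fin n) (Fin n) ℝ) {f g : EuclideanSpace ℝ (Fin n) → ℝ}
    {x : EuclideanSpace ℝ (Fin n)} (hf : ContDiffAt ℝ 2 f x) (hg : ContDiffAt ℝ 2 g x) :
    ellOp C (fun y => f y + g y) x = ellOp C f x + ellOp C g x := by
  simp only [ellOp, pd2_add hf hg, mul_add, Finset.sum_add_distrib]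

lemma ellOp_const_mul (C : Matrix (Fin n) (Fin n) ℝ) {f : EuclideanSpace ℝ (Fin n) → ℝ}
    {x : EuclideanSpace ℝ (Fin n)} (hf : ContDiffAt ℝ 2 f x) (c : ℝ) :
    ellOp C (fun y => c * f y) x = c * ellOp C f x := by
  simp only [ellOp, pd2_const_mul hf, Finset.mul_sum]
  exact Finset.sum_congr rfl fun i _ => Finset.sum_congr rfl fun j _ => by ring

lemma ellOp_sum (C : Matrix (Fin n) (Fin n) ℝ) {ι : Type*} (s : Finset ι)
    {f : ι → EuclideanSpace ℝ (Fin n) → ℝ} {x : EuclideanSpace ℝ (Fin n)}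
    (hf : ∀ a ∈ s, ContDiffAt ℝ 2 (f a) x) :
    ellOp C (fun y => ∑ a ∈ s, f a y) x = ∑ a ∈ s, ellOp C (f a) x := by
  simp only [ellOp, pd2_sum s hf, Finset.mul_sum]
  symm
  rw [Finset.sum_comm]
  exact Finset.sum_congr rfl fun i _ => Finset.sum_comm

lemma ellOp_mul {C : Matrix (Fin n) (Fin n) ℝ} (hC : ∀ i j, C i j = C j i)
    {f g : EuclideanSpace ℝ (Fin n) → ℝ}
    {x : EuclideanSpace ℝ (Fin n)} (hf : ContDiffAt ℝ 2 f x) (hg : ContDiffAt ℝ 2 g x) :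
    ellOp C (fun y => f y * g y) x = ellOp C f x * g x
      + 2 * (∑ i, ∑ j, C i j * (pd i f x * pd j g x)) + f x * ellOp C g x := by
  have h : ∑ i, ∑ j, C i j * (pd j f x * pd i g x) = ∑ i, ∑ j, C i j * (pd i f x * pd j g x) := by
    rw [Finset.sum_comm]
    exact Finset.sum_congr rfl fun i _ => Finset.sum_congr rfl fun j _ => by rw [hC]
  rw [two_mul]
  nth_rewrite 1 [← h]
  simp only [ellOp, pd2_mul hf hg, Finset.mul_sum, Finset.sum_mul, ← Finset.sum_add_distrib]
  exact Finset.sum_congr rfl fun i _ => Finset.sum_congr rfl fun j _ => by ring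

lemma pd3_comm {u : EuclideanSpace ℝ (Fin n) → ℝ} {p : EuclideanSpace ℝ (Fin n)}
    (hu : ContDiffAt ℝ 3 u p) (k i j : Fin n) :
    pd k (pd i (pd j u)) p = pd i (pd j (pd k u)) p := by
  rw [pd_comm (pd_contDiffAt hu (by norm_num) j)]
  refine (pd_congr ?_ i).eq_of_nhds
  filter_upwards [hu.eventually (by decide)] with y hy
  exact pd_comm (hy.of_le (by norm_num)) k j

lemma pd4_comm {u : EuclideanSpace ℝ (Fin n) → ℝ} {p : EuclideanSpace ℝ (Fin n)}
    (hu : ContDiffAt ℝ 4 u p) (k l i j : Fin n) :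
    pd k (pd l (pd i (pd j u))) p = pd i (pd j (pd k (pd l u))) p := by
  have h : pd l (pd i (pd j u)) =ᶠ[𝓝 p] pd i (pd j (pd l u)) := by
    filter_upwards [hu.eventually (by decide)] with y hy
    exact pd3_comm (hy.of_le (by norm_num)) l i j
  rw [(pd_congr h k).eq_of_nhds, pd3_comm (pd_contDiffAt hu (by norm_num) l)]

/-- With `C` the inverse Hessian, `C(∇a, ∇u_l) = a_l`. -/
lemma gamma_pd {C : Matrix (Fin n) (Fin n) ℝ} {u : EuclideanSpace ℝ (Fin n) → ℝ}
    {p : EuclideanSpace ℝ (Fin n)} (hinv : C * hess u p = 1)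
    (a : EuclideanSpace ℝ (Fin n) → ℝ) (l : Fin n) :
    ∑ i, ∑ j, C i j * (pd i a p * pd j (pd l u) p) = pd l a p := by
  have h : ∀ i, ∑ j, C i j * (pd i a p * pd j (pd l u) p) =
      pd i a p * (1 : Matrix (Fin n) (Fin n) ℝ) i l := fun i => by
    rw [← hinv, Matrix.mul_apply, Finset.mul_sum]
    exact Finset.sum_congr rfl fun j _ => by simp only [hess, Matrix.of_apply]; ring
  simp [h, Matrix.one_apply]

/-- Product rule for `a u_k u_l` when `C` is the inverse Hessian and the first derivatives of `u`
are annihilated by the operator. -/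
lemma ellOp_triple {C : Matrix (Fin n) (Fin n) ℝ} (hC : ∀ i j, C i j = C j i)
    {u a : EuclideanSpace ℝ (Fin n) → ℝ} {p : EuclideanSpace ℝ (Fin n)}
    (hu : ContDiffAt ℝ 3 u p) (ha : ContDiffAt ℝ 2 a p) (hinv : C * hess u p = 1)
    (hz : ∀ l, ellOp C (pd l u) p = 0) (k l : Fin n) :
    ellOp C (fun y => a y * pd k u y * pd l u y) p =
      ellOp C a p * pd k u p * pd l u p + 2 * (pd l u p * pd k a p) + 2 * (pd k u p * pd l a p)
        + 2 * (a p * pd k (pd l u) p) := by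
  have hk : ∀ k, ContDiffAt ℝ 2 (pd k u) p := fun k => pd_contDiffAt hu (by norm_num) k
  rw [ellOp_mul hC (ha.mul (hk k)) (hk l), gamma_pd hinv, hz, ellOp_mul hC ha (hk k),
    gamma_pd hinv, hz, pd_mul ha.diff2.self_of_nhds (hk k).diff2.self_of_nhds,
    pd_comm (hu.of_le (by norm_num)) l k]
  ring

lemma psiFn_eq (u : EuclideanSpace ℝ (Fin n) → ℝ) :
    psiFn u = fun y => (∑ k, ∑ l, (pd k (pd k u) y * pd l u y * pd l u y
      + (-1) * (pd k (pd l u) y * pd k u y * pd l u y))) + (-(2 * ((n : ℝ) - 1))) * u y := by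
  funext y
  have h : ∑ k, ∑ l, bMat u y k l * pd k u y * pd l u y =
      ∑ k, ∑ l, (pd k (pd k u) y * pd l u y * pd l u y
      + (-1) * (pd k (pd l u) y * pd k u y * pd l u y)) := by
    simp only [bMat, Matrix.sub_apply, Matrix.smul_apply, Matrix.one_apply, smul_eq_mul, sub_mul,
      Finset.sum_sub_distrib, Finset.sum_add_distrib, hess, Matrix.of_apply, ← Finset.mul_sum,
      Matrix.trace, Matrix.diag]
    rw [sub_eq_add_neg, neg_one_mul]
    congr 1
    rw [Finset.sum_comm (f := fun k l => pd k (pd k u) y * pd l u y * pd l u y)]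
    simp [Finset.sum_mul]
  rw [psiFn, h]
  ring

lemma psiFn_contDiffAt {u : EuclideanSpace ℝ (Fin n) → ℝ} {p : EuclideanSpace ℝ (Fin n)}
    (hu : ContDiffAt ℝ 4 u p) : ContDiffAt ℝ 2 (psiFn u) p := by
  have h1 : ∀ k, ContDiffAt ℝ 2 (pd k u) p := fun k => pd_contDiffAt (a := 3)
    (hu.of_le (by norm_num)) (by norm_num) k
  have h2 : ∀ k l, ContDiffAt ℝ 2 (pd k (pd l u)) p := fun k l =>
    pd_contDiffAt (a := 3) (pd_contDiffAt hu (by norm_num) l) (by norm_num) k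
  have h0 : ContDiffAt ℝ 2 u p := hu.of_le (by norm_num)
  rw [psiFn_eq]
  exact (ContDiffAt.sum fun k _ => ContDiffAt.sum fun l _ =>
    (((h2 k k).mul (h1 l)).mul (h1 l)).add
      (contDiffAt_const.mul (((h2 k l).mul (h1 k)).mul (h1 l)))).add
    (contDiffAt_const.mul h0)

/-- The first-order terms of `Σ u^{ij} ψ_{ij}` cancel because `(b^{kl})` is divergence free. -/
lemma ellOp_psi {C : Matrix (Fin n) (Fin n) ℝ} (hC : ∀ i j, C i j = C j i)
    {u : EuclideanSpace ℝ (Fin n) → ℝ} {p : EuclideanSpace ℝ (Fin n)}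
    (hu : ContDiffAt ℝ 4 u p) (hinv : C * hess u p = 1)
    (hz : ∀ l, ellOp C (pd l u) p = 0) (hn : ellOp C u p = n) :
    ellOp C (psiFn u) p =
      ∑ k, ∑ l, (ellOp C (pd k (pd k u)) p * pd l u p * pd l u p
        - ellOp C (pd k (pd l u)) p * pd k u p * pd l u p)
      + 2 * (∑ k, ∑ l, (hess u p k k * hess u p l l - hess u p k l * hess u p k l))
      - 2 * ((n : ℝ) * (n - 1)) := by
  have hu3 : ContDiffAt ℝ 3 u p := hu.of_le (by norm_num)
  have h1 : ∀ k, ContDiffAt ℝ 2 (pd k u) p := fun k => pd_contDiffAt hu3 (by norm_num) k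
  have h2 : ∀ k l, ContDiffAt ℝ 2 (pd k (pd l u)) p := fun k l =>
    pd_contDiffAt (a := 3) (pd_contDiffAt hu (by norm_num) l) (by norm_num) k
  have h0 : ContDiffAt ℝ 2 u p := hu.of_le (by norm_num)
  have ht : ∀ k l, ContDiffAt ℝ 2 (fun y => pd k (pd k u) y * pd l u y * pd l u y) p :=
    fun k l => ((h2 k k).mul (h1 l)).mul (h1 l)
  have ht' : ∀ k l, ContDiffAt ℝ 2 (fun y => pd k (pd l u) y * pd k u y * pd l u y) p :=
    fun k l => ((h2 k l).mul (h1 k)).mul (h1 l)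
  have ht'' : ∀ k l, ContDiffAt ℝ 2 (fun y => (-1) * (pd k (pd l u) y * pd k u y * pd l u y)) p :=
    fun k l => contDiffAt_const.mul (ht' k l)
  have hs : ∀ k, ContDiffAt ℝ 2 (fun y => ∑ l, (pd k (pd k u) y * pd l u y * pd l u y
      + (-1) * (pd k (pd l u) y * pd k u y * pd l u y))) p := fun k =>
    ContDiffAt.sum fun l _ => (ht k l).add (ht'' k l)
  rw [psiFn_eq, ellOp_add C (ContDiffAt.sum fun k _ => hs k) (contDiffAt_const.mul h0),
    ellOp_sum C _ fun k _ => hs k, ellOp_const_mul C h0, hn]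
  have hterm : ∀ k l, ellOp C (fun y => pd k (pd k u) y * pd l u y * pd l u y
      + (-1) * (pd k (pd l u) y * pd k u y * pd l u y)) p =
      (ellOp C (pd k (pd k u)) p * pd l u p * pd l u p
        - ellOp C (pd k (pd l u)) p * pd k u p * pd l u p)
      + 2 * (hess u p k k * hess u p l l - hess u p k l * hess u p k l)
      + 2 * (pd l u p * pd l (pd k (pd k u)) p - pd k u p * pd k (pd l (pd l u)) p) :=
      fun k l => by
    rw [ellOp_add C (ht k l) (ht'' k l), ellOp_const_mul C (ht' k l),
      ellOp_triple hC hu3 (h2 k k) hinv hz, ellOp_triple hC hu3 (h2 k l) hinv hz]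
    have e1 : pd k (pd k (pd l u)) p = pd l (pd k (pd k u)) p := (pd3_comm hu3 l k k).symm
    have e2 : pd l (pd k (pd l u)) p = pd k (pd l (pd l u)) p := pd_comm (h1 l) l k
    simp only [hess, Matrix.of_apply]
    rw [e1, e2]
    ring
  have hterm2 : ∀ k, ellOp C (fun y => ∑ l, (pd k (pd k u) y * pd l u y * pd l u y
      + (-1) * (pd k (pd l u) y * pd k u y * pd l u y))) p = ∑ l, _ := fun k =>
    (ellOp_sum C _ fun l _ => (ht k l).add (ht'' k l)).trans
      (Finset.sum_congr rfl fun l _ => hterm k l)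
  rw [Finset.sum_congr rfl fun k _ => hterm2 k]
  have hc : ∑ k, ∑ l, pd l u p * pd l (pd k (pd k u)) p =
      ∑ k, ∑ l, pd k u p * pd k (pd l (pd l u)) p := Finset.sum_comm
  simp only [Finset.sum_add_distrib, Finset.sum_sub_distrib, ← Finset.mul_sum] at hc ⊢
  linarith

/-- The differential inequality `u^{ij} ψ_{ij} ≥ 4σ₂ - 2n(n-1)`. The function
`y ↦ tr((D²u(p))⁻¹ D²u(y))` has a local minimum at `p`, by AM-GM and `det D²u = 1`. Its first order condition is
`u^{ij} u_{ijl} = 0`, and its second order condition says that the form `u^{ij} u_{ijkl}` is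
nonnegative; these take the place of the once and twice differentiated equation. -/
lemma ellOp_psi_ge {u : EuclideanSpace ℝ (Fin n) → ℝ} {p : EuclideanSpace ℝ (Fin n)}
    (hu : ContDiffAt ℝ 4 u p) (hpos : ∀ᶠ y in 𝓝 p, (hess u y).PosDef)
    (hMA : ∀ᶠ y in 𝓝 p, (hess u y).det = 1) :
    2 * (∑ k, ∑ l, (hess u p k k * hess u p l l - hess u p k l * hess u p k l)
      - (n : ℝ) * (n - 1)) ≤ ellOp (hess u p)⁻¹ (psiFn u) p := by
  set C := (hess u p)⁻¹ with hCdef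
  have hdet := hMA.self_of_nhds
  have hPD : C.PosDef := hpos.self_of_nhds.inv
  have hC : ∀ i j, C i j = C j i := fun i j => by simpa using hPD.isHermitian.apply j i
  have hinv : C * hess u p = 1 := Matrix.nonsing_inv_mul _ (by rw [hdet]; exact isUnit_one)
  have hCd : C.det = 1 := by
    have := congrArg Matrix.det hinv
    rwa [Matrix.det_mul, hdet, mul_one, Matrix.det_one] at this
  have h2 : ∀ k l, ContDiffAt ℝ 2 (pd k (pd l u)) p := fun k l =>
    pd_contDiffAt (a := 3) (pd_contDiffAt hu (by norm_num) l) (by norm_num) k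
  have htr : ∀ y, (∀ i j, pd i (pd j u) y = pd j (pd i u) y) →
      (C * hess u y).trace = ellOp C u y := fun y hy => by
    simp only [Matrix.trace, Matrix.diag, Matrix.mul_apply, ellOp, hess, Matrix.of_apply]
    exact Finset.sum_congr rfl fun i _ => Finset.sum_congr rfl fun j _ => by rw [hy]
  have hsymm : ∀ᶠ y in 𝓝 p, ∀ i j, pd i (pd j u) y = pd j (pd i u) y := by
    filter_upwards [hu.eventually (by decide)] with y hy i j
    exact pd_comm (hy.of_le (by norm_num)) i j
  have hval : ellOp C u p = n := by
    rw [← htr p hsymm.self_of_nhds, hinv]; simp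
  have hmin : IsLocalMin (ellOp C u) p := by
    filter_upwards [hpos, hMA, hsymm] with y h1 h3 h4
    rw [hval, ← htr y h4]
    exact trace_mul_ge hPD h1 hCd h3
  have hF : ellOp C u = fun y => ∑ i, ∑ j, C i j * pd i (pd j u) y := rfl
  have hterm : ∀ i j, ContDiffAt ℝ 2 (fun y => C i j * pd i (pd j u) y) p := fun i j =>
    contDiffAt_const.mul (h2 i j)
  have hrow : ∀ i, ContDiffAt ℝ 2 (fun y => ∑ j, C i j * pd i (pd j u) y) p := fun i =>
    ContDiffAt.sum fun j _ => hterm i j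
  have hFc : ContDiffAt ℝ 2 (ellOp C u) p := by
    rw [hF]; exact ContDiffAt.sum fun i _ => hrow i
  have hz : ∀ l, ellOp C (pd l u) p = 0 := fun l => by
    rw [← pd_eq_zero_of_isLocalMin hmin l, hF, pd_sum _ fun i _ => (hrow i).diff2.self_of_nhds]
    refine Finset.sum_congr rfl fun i _ => ?_
    rw [pd_sum _ fun j _ => (hterm i j).diff2.self_of_nhds]
    refine Finset.sum_congr rfl fun j _ => ?_
    rw [pd_const_mul (h2 i j).diff2.self_of_nhds, pd3_comm (hu.of_le (by norm_num)) l i j]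
  have hQ : ∀ k l, pd k (pd l (ellOp C u)) p = ellOp C (pd k (pd l u)) p := fun k l => by
    rw [hF, pd2_sum _ fun i _ => hrow i]
    refine Finset.sum_congr rfl fun i _ => ?_
    rw [pd2_sum _ fun j _ => hterm i j]
    refine Finset.sum_congr rfl fun j _ => ?_
    rw [pd2_const_mul (h2 i j), pd4_comm hu]
  have hpsd := quadForm_nonneg_of_isLocalMin hFc hmin
  have := trace_sub_nonneg (Q := fun k l => pd k (pd l (ellOp C u)) p)
    (fun k l => pd_comm hFc k l) hpsd (fun k => pd k u p)
  simp only [hQ] at this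
  rw [ellOp_psi hC hu hinv hz hval]
  linarith

/-! ### Strong maximum principle -/

lemma pd_normsq (a x : EuclideanSpace ℝ (Fin n)) (i : Fin n) :
    pd i (fun y => ‖y - a‖ ^ 2) x = 2 * (x i - a i) := by
  have h := ((hasFDerivAt_id x).sub_const a).norm_sq
  unfold pd
  rw [HasFDerivAt.fderiv (f := fun y => ‖y - a‖ ^ 2) h]
  simp [EuclideanSpace.inner_single_right]

lemma pd2_normsq (a x : EuclideanSpace ℝ (Fin n)) (i j : Fin n) :
    pd i (pd j (fun y => ‖y - a‖ ^ 2)) x = 2 * (1 : Matrix (Fin n) (Fin n) ℝ) i j := by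
  have h : pd j (fun y : EuclideanSpace ℝ (Fin n) => ‖y - a‖ ^ 2) = fun y => 2 * (y j - a j) :=
    funext fun y => pd_normsq a y j
  rw [h, pd]
  have h2 : HasFDerivAt (fun y : EuclideanSpace ℝ (Fin n) => 2 * (y j - a j))
      ((2 : ℝ) • (EuclideanSpace.proj j : EuclideanSpace ℝ (Fin n) →L[ℝ] ℝ)) x :=
    (((EuclideanSpace.proj j : EuclideanSpace ℝ (Fin n) →L[ℝ] ℝ).hasFDerivAt).sub_const
      (a j)).const_mul 2
  rw [h2.fderiv]
  simp [Matrix.one_apply, eq_comm]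

lemma normsq_contDiff (a : EuclideanSpace ℝ (Fin n)) :
    ContDiff ℝ 2 (fun y : EuclideanSpace ℝ (Fin n) => ‖y - a‖ ^ 2) :=
  (contDiff_id.sub contDiff_const).norm_sq ℝ

/-- Minus twice the power of `x` with respect to the sphere with diameter `[a, b]`; it is
nonnegative exactly on the closed ball with that diameter. -/
noncomputable def ballFn (a b : EuclideanSpace ℝ (Fin n)) (x : EuclideanSpace ℝ (Fin n)) : ℝ :=
  ‖b - a‖ ^ 2 + (-1) * (‖x - a‖ ^ 2 + ‖x - b‖ ^ 2)

/-- The barrier `s + K s²` with `s = ballFn a b` and `K = n / |b - a|²`; this `K` makes its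
Laplacian positive at `b`. -/
noncomputable def barrier (a b : EuclideanSpace ℝ (Fin n)) (x : EuclideanSpace ℝ (Fin n)) : ℝ :=
  ballFn a b x + (n / ‖b - a‖ ^ 2) * (ballFn a b x * ballFn a b x)

lemma ballFn_contDiff (a b : EuclideanSpace ℝ (Fin n)) : ContDiff ℝ 2 (ballFn a b) :=
  contDiff_const.add (contDiff_const.mul ((normsq_contDiff a).add (normsq_contDiff b)))

lemma barrier_contDiff (a b : EuclideanSpace ℝ (Fin n)) : ContDiff ℝ 2 (barrier a b) :=
  (ballFn_contDiff a b).add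
    (contDiff_const.mul ((ballFn_contDiff a b).mul (ballFn_contDiff a b)))

lemma pd_ballFn (a b x : EuclideanSpace ℝ (Fin n)) (i : Fin n) :
    pd i (ballFn a b) x = -2 * (x i - a i) - 2 * (x i - b i) := by
  have ha : DifferentiableAt ℝ (fun y : EuclideanSpace ℝ (Fin n) => ‖y - a‖ ^ 2) x :=
    (normsq_contDiff a).contDiffAt.diff2.self_of_nhds
  have hb : DifferentiableAt ℝ (fun y : EuclideanSpace ℝ (Fin n) => ‖y - b‖ ^ 2) x :=
    (normsq_contDiff b).contDiffAt.diff2.self_of_nhds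
  unfold ballFn
  rw [pd_add (differentiableAt_const _) ((ha.fun_add hb).const_mul _),
    pd_const_mul (ha.fun_add hb),
    pd_add ha hb, pd_normsq, pd_normsq]
  simp [pd]
  ring

lemma pd2_ballFn (a b x : EuclideanSpace ℝ (Fin n)) (i j : Fin n) :
    pd i (pd j (ballFn a b)) x = -4 * (1 : Matrix (Fin n) (Fin n) ℝ) i j := by
  have ha := (normsq_contDiff a).contDiffAt (x := x)
  have hb := (normsq_contDiff b).contDiffAt (x := x)
  unfold ballFn
  rw [pd2_add contDiffAt_const (contDiffAt_const.mul (ha.add hb)), pd2_const_mul (ha.add hb),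
    pd2_add ha hb, pd2_normsq, pd2_normsq]
  have : pd j (fun _ : EuclideanSpace ℝ (Fin n) => ‖b - a‖ ^ 2) = fun _ => 0 := by
    funext y; simp [pd]
  rw [this]
  simp [pd]
  ring

lemma ballFn_right (a b : EuclideanSpace ℝ (Fin n)) : ballFn a b b = 0 := by simp [ballFn]

lemma ellOp_barrier (hn : 0 < n) {a b : EuclideanSpace ℝ (Fin n)} (hab : b ≠ a) :
    0 < ellOp 1 (barrier a b) b := by
  have hs := (ballFn_contDiff a b).contDiffAt (x := b)
  have hR : 0 < ‖b - a‖ ^ 2 := by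
    have := norm_pos_iff.2 (sub_ne_zero.2 hab)
    positivity
  unfold barrier
  rw [ellOp_add _ hs (contDiffAt_const.mul (hs.mul hs)), ellOp_const_mul _ (hs.mul hs),
    ellOp_mul (fun i j => by simp [Matrix.one_apply, eq_comm]) hs hs, ballFn_right]
  have h1 : ellOp 1 (ballFn a b) b = -4 * n := by
    simp [ellOp, pd2_ballFn, Matrix.one_apply]; ring
  have h2 : ∑ i, ∑ j, (1 : Matrix (Fin n) (Fin n) ℝ) i j *
      (pd i (ballFn a b) b * pd j (ballFn a b) b) = 4 * ‖b - a‖ ^ 2 := by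
    rw [EuclideanSpace.norm_sq_eq, Finset.mul_sum]
    refine Finset.sum_congr rfl fun i _ => ?_
    simp [pd_ballFn, Matrix.one_apply]
    ring
  rw [h1, h2]
  have hn' : (0 : ℝ) < n := by exact_mod_cast hn
  have hK : (n : ℝ) / ‖b - a‖ ^ 2 * ‖b - a‖ ^ 2 = n := div_mul_cancel₀ _ hR.ne'
  nlinarith

/-- If `{f = m}` is a nonempty proper subset of the connected open set `Ω`, then some point `b` of
it lies on the boundary of an open ball, centred at `a`, that contains no point of it in `Ω`. -/
lemma exists_touching {Ω : Set (EuclideanSpace ℝ (Fin n))} (hΩ : IsOpen Ω)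
    (hc : IsPreconnected Ω) {f : EuclideanSpace ℝ (Fin n) → ℝ} (hf : ContinuousOn f Ω) {m : ℝ}
    {z : EuclideanSpace ℝ (Fin n)} (hz : z ∈ Ω) (hfz : f z = m)
    (hne : ∃ x ∈ Ω, f x ≠ m) :
    ∃ a b, b ∈ Ω ∧ f b = m ∧ b ≠ a ∧ ∀ x ∈ Ω, ‖x - a‖ < ‖b - a‖ → f x ≠ m := by
  have hV : IsOpen (Ω ∩ f ⁻¹' {m}ᶜ) := hf.isOpen_inter_preimage hΩ isOpen_compl_singleton
  obtain ⟨y', hy'c, hy'Ω, hy'm⟩ : ∃ y' ∈ closure (Ω ∩ f ⁻¹' {m}ᶜ), y' ∈ Ω ∧ f y' = m := by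
    by_contra! hcon
    obtain ⟨x, hx, hxm⟩ := hne
    have := hc.subset_of_closure_inter_subset hV ⟨x, hx, hx, hxm⟩
      (fun y hy => ⟨hy.2, hcon y hy.1 hy.2⟩)
    exact (this hz).2 hfz
  obtain ⟨ε, hε, hball⟩ := Metric.isOpen_iff.1 hΩ y' hy'Ω
  obtain ⟨a, ⟨haΩ, ham⟩, had⟩ := Metric.mem_closure_iff.1 hy'c (ε / 3) (by positivity)
  have hsub : Metric.closedBall a (ε / 2) ⊆ Ω := fun x hx => hball <| by
    rw [Metric.mem_closedBall] at hx
    rw [Metric.mem_ball]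
    have := dist_triangle x a y'
    rw [dist_comm a y'] at this
    linarith
  have hK : IsCompact (Metric.closedBall a (ε / 2) ∩ f ⁻¹' {m}) :=
    (isCompact_closedBall a (ε / 2)).of_isClosed_subset
      ((hf.mono hsub).preimage_isClosed_of_isClosed Metric.isClosed_closedBall isClosed_singleton)
      Set.inter_subset_left
  have hy'K : y' ∈ Metric.closedBall a (ε / 2) ∩ f ⁻¹' {m} :=
    ⟨by rw [Metric.mem_closedBall]; linarith, hy'm⟩
  obtain ⟨b, hbK, hbmin⟩ := hK.exists_isMinOn ⟨y', hy'K⟩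
    (f := fun x => ‖x - a‖) (by fun_prop)
  refine ⟨a, b, hsub hbK.1, hbK.2, ?_, ?_⟩
  · rintro rfl
    exact ham hbK.2
  · intro x _ hlt hxm
    have hb1 := hbK.1
    rw [Metric.mem_closedBall, dist_eq_norm] at hb1
    have hxK : x ∈ Metric.closedBall a (ε / 2) ∩ f ⁻¹' {m} :=
      ⟨by rw [Metric.mem_closedBall, dist_eq_norm]; linarith, hxm⟩
    exact absurd (hbmin hxK) (not_le.2 hlt)

lemma ellOp_nonneg_of_isLocalMin {C : Matrix (Fin n) (Fin n) ℝ} (hC : C.PosSemidef)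
    {f : EuclideanSpace ℝ (Fin n) → ℝ} {x : EuclideanSpace ℝ (Fin n)}
    (hf : ContDiffAt ℝ 2 f x) (hm : IsLocalMin f x) : 0 ≤ ellOp C f x := by
  unfold ellOp
  exact sum_mul_nonneg hC (fun k l => pd k (pd l f) x) (quadForm_nonneg_of_isLocalMin hf hm)

lemma ellOp_nonpos_of_isLocalMax {C : Matrix (Fin n) (Fin n) ℝ} (hC : C.PosSemidef)
    {f : EuclideanSpace ℝ (Fin n) → ℝ} {x : EuclideanSpace ℝ (Fin n)}
    (hf : ContDiffAt ℝ 2 f x) (hm : IsLocalMax f x) : ellOp C f x ≤ 0 := by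
  have hmin : IsLocalMin (fun y => (-1) * f y) x := by
    have hm' : ∀ᶠ y in 𝓝 x, f y ≤ f x := hm
    filter_upwards [hm'] with y hy
    linarith
  have hc : ContDiffAt ℝ 2 (fun y => (-1) * f y) x := contDiffAt_const.mul hf
  have h := ellOp_nonneg_of_isLocalMin hC hc hmin
  rw [ellOp_const_mul C hf] at h
  linarith

/-- E. Hopf's strong maximum principle for `Σ A_{ij} ∂_i ∂_j`, in the case where `A` is the
identity on the set where the maximum is attained. At a touching point `b` of that set, a small
multiple of the barrier is added to `f`: the sum would have an interior local maximum near `b`,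
where the operator is positive. -/
lemma strong_max (hn : 0 < n) {Ω : Set (EuclideanSpace ℝ (Fin n))} (hΩ : IsOpen Ω)
    (hc : IsPreconnected Ω) {f : EuclideanSpace ℝ (Fin n) → ℝ}
    {A : EuclideanSpace ℝ (Fin n) → Matrix (Fin n) (Fin n) ℝ}
    (hf : ∀ x ∈ Ω, ContDiffAt ℝ 2 f x) (hA : ∀ x ∈ Ω, ContinuousAt A x)
    (hAp : ∀ x ∈ Ω, (A x).PosSemidef) (hsub : ∀ x ∈ Ω, 0 ≤ ellOp (A x) f x) {m : ℝ}
    (hle : ∀ x ∈ Ω, f x ≤ m) (hone : ∀ x ∈ Ω, f x = m → A x = 1)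
    {z : EuclideanSpace ℝ (Fin n)} (hz : z ∈ Ω) (hfz : f z = m) : ∀ x ∈ Ω, f x = m := by
  by_contra! hne
  have hfc : ContinuousOn f Ω := fun x hx => (hf x hx).continuousAt.continuousWithinAt
  obtain ⟨a, b, hbΩ, hfb, hba, htouch⟩ := exists_touching hΩ hc hfc hz hfz hne
  set h := barrier a b with hh
  have hhc : ContDiff ℝ 2 h := barrier_contDiff a b
  have hLc : ContinuousAt (fun x => ellOp (A x) h x) b := by
    unfold ellOp
    refine tendsto_finsetSum _ fun i _ => tendsto_finsetSum _ fun j _ => ?_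
    have h1 : ContinuousAt (fun x => A x i j) b :=
      (continuous_apply_apply i j).continuousAt.comp (hA b hbΩ)
    exact h1.mul (pd_contDiffAt (a := 1) (b := 0)
      (pd_contDiffAt hhc.contDiffAt (by norm_num) j) (by norm_num) i).continuousAt
  have hL0 : 0 < ellOp (A b) h b := by
    rw [hone b hbΩ hfb]; exact ellOp_barrier hn hba
  have hfac : ContinuousAt (fun x => 1 + (n / ‖b - a‖ ^ 2) * ballFn a b x) b :=
    continuousAt_const.add (continuousAt_const.mul (ballFn_contDiff a b).continuous.continuousAt)
  have hev : ∀ᶠ x in 𝓝 b, x ∈ Ω ∧ 0 < ellOp (A x) h x ∧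
      0 < 1 + (n / ‖b - a‖ ^ 2) * ballFn a b x := by
    refine Filter.Eventually.and (hΩ.mem_nhds hbΩ) ((hLc.eventually (lt_mem_nhds hL0)).and
      (hfac.eventually (lt_mem_nhds ?_)))
    simp [ballFn_right]
  obtain ⟨ρ, hρ, hball⟩ := Metric.nhds_basis_closedBall.eventually_iff.1 hev
  -- On the sphere around `b`, the points with `ballFn a b ≥ 0` lie in the open ball around `a`,
  -- so `f < m` there and `ε` can be chosen by compactness.
  have hS1 : IsCompact (Metric.sphere b ρ ∩ {x | 0 ≤ ballFn a b x}) :=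
    (isCompact_sphere b ρ).inter_right
      (isClosed_le continuous_const (ballFn_contDiff a b).continuous)
  obtain ⟨ε, hε, hεle⟩ := hS1.exists_forall_le' (f := fun x => (m - f x) / (1 + |h x|)) (a := 0)
    (by
      refine ContinuousOn.div (continuousOn_const.sub (hfc.mono ?_)) ?_ ?_
      · exact fun x hx => (hball (Metric.sphere_subset_closedBall hx.1)).1
      · exact (continuous_const.add hhc.continuous.abs).continuousOn
      · intro x _; positivity)
    (by
      rintro x ⟨hxS, hx0⟩
      have hxΩ := (hball (Metric.sphere_subset_closedBall hxS)).1
      have hxb : 0 < ‖x - b‖ := by rw [← dist_eq_norm, Metric.mem_sphere.1 hxS]; exact hρ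
      have hlt : ‖x - a‖ < ‖b - a‖ := by
        refine lt_of_pow_lt_pow_left₀ 2 (norm_nonneg _) ?_
        have : 0 < ‖x - b‖ ^ 2 := by positivity
        simp only [Set.mem_ofPred_eq, ballFn] at hx0
        linarith
      have : f x < m := lt_of_le_of_ne (hle x hxΩ) (htouch x hxΩ hlt)
      exact div_pos (by linarith) (by positivity))
  have hsphere : ∀ x ∈ Metric.sphere b ρ, f x + ε * h x < m := by
    intro x hxS
    obtain ⟨hxΩ, -, hx1⟩ := hball (Metric.sphere_subset_closedBall hxS)
    rcases le_or_gt 0 (ballFn a b x) with h0 | h0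
    · have := hεle x ⟨hxS, h0⟩
      rw [le_div_iff₀ (by positivity)] at this
      have h3 : ε * h x ≤ ε * |h x| := by gcongr; exact le_abs_self _
      linarith
    · have hneg : h x < 0 := by
        have : h x = ballFn a b x * (1 + (n / ‖b - a‖ ^ 2) * ballFn a b x) := by
          rw [hh, barrier]; ring
        rw [this]
        exact mul_neg_of_neg_of_pos h0 hx1
      have := mul_neg_of_pos_of_neg hε hneg
      linarith [hle x hxΩ]
  have hwc : ContinuousOn (fun x => f x + ε * h x) (Metric.closedBall b ρ) :=
    (hfc.mono fun x hx => (hball hx).1).add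
      (continuous_const.mul hhc.continuous).continuousOn
  obtain ⟨q, hq, hqmax⟩ := (isCompact_closedBall b ρ).exists_isMaxOn
    ⟨b, Metric.mem_closedBall_self hρ.le⟩ hwc
  have hwb : f b + ε * h b = m := by
    rw [hh, barrier, ballFn_right, hfb]; ring
  have hqin : q ∈ Metric.ball b ρ := by
    rcases lt_or_eq_of_le (Metric.mem_closedBall.1 hq) with h1 | h1
    · exact h1
    · have h2 := hsphere q h1
      have h3 : f b + ε * h b ≤ f q + ε * h q := hqmax (Metric.mem_closedBall_self hρ.le)
      linarith
  obtain ⟨hqΩ, hqL, -⟩ := hball hq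
  have hloc : IsLocalMax (fun x => f x + ε * h x) q :=
    hqmax.isLocalMax (Filter.mem_of_superset (Metric.isOpen_ball.mem_nhds hqin)
      Metric.ball_subset_closedBall)
  have hεh : ContDiffAt ℝ 2 (fun x => ε * h x) q := contDiffAt_const.mul hhc.contDiffAt
  have hfin := ellOp_nonpos_of_isLocalMax (hAp q hqΩ) ((hf q hqΩ).add hεh) hloc
  rw [ellOp_add _ (hf q hqΩ) hεh, ellOp_const_mul _ hhc.contDiffAt] at hfin
  have := mul_pos hε hqL
  linarith [hsub q hqΩ]

/-! ### From the Hessian to the ball -/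

/-- A function with Hessian equal to the identity on a connected open set is
`(1/2)|x - x₀|² + c` there. -/
lemma exists_paraboloid {Ω : Set (EuclideanSpace ℝ (Fin n))} (hΩ : IsOpen Ω)
    (hc : IsPreconnected Ω) {u : EuclideanSpace ℝ (Fin n) → ℝ}
    (hu : ∀ x ∈ Ω, ContDiffAt ℝ 2 u x) (hH : ∀ x ∈ Ω, hess u x = 1) :
    ∃ (x₀ : EuclideanSpace ℝ (Fin n)) (c : ℝ), ∀ x ∈ Ω, u x = (1 / 2) * ‖x - x₀‖ ^ 2 + c := by
  have ext_pd : ∀ (f g : EuclideanSpace ℝ (Fin n) → ℝ) (x : EuclideanSpace ℝ (Fin n)),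
      (∀ i, pd i f x = pd i g x) → fderiv ℝ f x = fderiv ℝ g x := fun f g x h => by
    ext v
    simp only [fderiv_eq_sum_pd, h]
  have hgrad : ∀ k, ∃ c : ℝ, ∀ x ∈ Ω, pd k u x = x k + c := by
    intro k
    have hq : ∀ x, ContDiffAt ℝ 2 (fun y : EuclideanSpace ℝ (Fin n) => ‖y - 0‖ ^ 2) x := fun x =>
      (normsq_contDiff 0).contDiffAt
    obtain ⟨c, hc'⟩ := hΩ.exists_eq_add_of_fderiv_eq hc (f := pd k u)
      (g := fun y => (1 / 2) * pd k (fun y => ‖y - 0‖ ^ 2) y)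
      (fun x hx => ((hu x hx).pd_diff k).differentiableWithinAt)
      (fun x hx => (((hq x).pd_diff k).const_mul _).differentiableWithinAt)
      (fun x hx => ext_pd _ _ x fun i => by
        rw [pd_const_mul ((hq x).pd_diff k), pd2_normsq, ← hH x hx]
        simp [hess])
    refine ⟨c, fun x hx => ?_⟩
    have h := hc' hx
    simp only [pd_normsq] at h
    rw [h]
    simp
  choose c hc' using hgrad
  refine ⟨WithLp.toLp 2 (fun k => - c k), ?_⟩
  set x₀ : EuclideanSpace ℝ (Fin n) := WithLp.toLp 2 (fun k => - c k) with hx₀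
  have hq : ∀ x, DifferentiableAt ℝ (fun y : EuclideanSpace ℝ (Fin n) => ‖y - x₀‖ ^ 2) x :=
    fun x => (normsq_contDiff x₀).contDiffAt.diff2.self_of_nhds
  obtain ⟨d, hd⟩ := hΩ.exists_eq_add_of_fderiv_eq hc (f := u)
    (g := fun y => (1 / 2) * ‖y - x₀‖ ^ 2)
    (fun x hx => (hu x hx).diff2.self_of_nhds.differentiableWithinAt)
    (fun x hx => ((hq x).const_mul _).differentiableWithinAt)
    (fun x hx => ext_pd _ _ x fun i => by
      rw [pd_const_mul (hq x), pd_normsq, hc' i x hx, hx₀]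
      simp)
  exact ⟨d, fun x hx => hd hx⟩

/-- A nonempty bounded open set whose boundary lies on the level set `|x - x₀|² = -2c` is a
ball. -/
lemma eq_ball_of_frontier (hn : 0 < n) {Ω : Set (EuclideanSpace ℝ (Fin n))} (hΩ : IsOpen Ω)
    (hb : Bornology.IsBounded Ω) (hne : Ω.Nonempty) {x₀ : EuclideanSpace ℝ (Fin n)} {c : ℝ}
    (hfr : ∀ x ∈ frontier Ω, (1 / 2) * ‖x - x₀‖ ^ 2 + c = 0) :
    ∃ r : ℝ, 0 < r ∧ c = -(1 / 2) * r ^ 2 ∧ Ω = Metric.ball x₀ r := by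
  have : Nonempty (Fin n) := ⟨⟨0, hn⟩⟩
  have hcomp : IsCompact (closure Ω) := hb.isCompact_closure
  obtain ⟨q, hq, hqmax⟩ := hcomp.exists_isMaxOn hne.closure (f := fun x => dist x x₀)
    (by fun_prop)
  have hsub : Ω ⊆ Metric.ball x₀ (dist q x₀) := by
    rw [← interior_closedBall']
    exact interior_maximal (fun x hx => hqmax (subset_closure hx)) hΩ
  have hqf : q ∈ frontier Ω := by
    rw [hΩ.frontier_eq]
    exact ⟨hq, fun h => lt_irrefl _ (Metric.mem_ball.1 (hsub h))⟩
  have hr : 0 < dist q x₀ := by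
    obtain ⟨x, hx⟩ := hne
    exact dist_nonneg.trans_lt (Metric.mem_ball.1 (hsub hx))
  have hcval : c = -(1 / 2) * dist q x₀ ^ 2 := by
    rw [dist_eq_norm]; linarith [hfr q hqf]
  refine ⟨dist q x₀, hr, hcval, hsub.antisymm ?_⟩
  refine (convex_ball x₀ _).isPreconnected.subset_of_closure_inter_subset hΩ ?_ ?_
  · obtain ⟨x, hx⟩ := hne
    exact ⟨x, hsub hx, hx⟩
  · rintro x ⟨hxc, hxb⟩
    by_contra hxΩ
    have h1 := hfr x (by rw [hΩ.frontier_eq]; exact ⟨hxc, hxΩ⟩)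
    rw [Metric.mem_ball, dist_eq_norm] at hxb
    rw [hcval] at h1
    have h2 := pow_lt_pow_left₀ hxb (norm_nonneg _) two_ne_zero
    linarith

end Aux

/-- Rigidity for `n ≥ 3`: if `ψ` attains its maximum at an interior point,
then `u = (1/2)(|x−x₀|² − r²)` and `Ω` is the ball `B_r(x₀)`. -/
theorem psi_interior_max_rigidity {n : ℕ} (hn : 3 ≤ n)
    (Ω U : Set (EuclideanSpace ℝ (Fin n)))
    (hΩo : IsOpen Ω) (hΩc : Convex ℝ Ω) (hΩb : Bornology.IsBounded Ω)
    (hUo : IsOpen U) (hUcl : closure Ω ⊆ U)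
    (u : EuclideanSpace ℝ (Fin n) → ℝ)
    (hu : ContDiffOn ℝ 4 u U)
    (hpos : ∀ x ∈ Ω, (hess u x).PosDef)
    (hMA : ∀ x ∈ Ω, (hess u x).det = 1)
    (hbd : ∀ x ∈ frontier Ω, u x = 0)
    (hmax : ∃ z ∈ Ω, ∀ x ∈ closure Ω, psiFn u x ≤ psiFn u z) :
    ∃ (x₀ : EuclideanSpace ℝ (Fin n)) (r : ℝ), 0 < r ∧
      (∀ x ∈ Ω, u x = (1 / 2) * (‖x - x₀‖ ^ 2 - r ^ 2)) ∧
      Ω = Metric.ball x₀ r := by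
  obtain ⟨z, hzΩ, hzmax⟩ := hmax
  have hn0 : 0 < n := by omega
  have hcd : ∀ x ∈ closure Ω, ContDiffAt ℝ 4 u x := fun x hx =>
    hu.contDiffAt (hUo.mem_nhds (hUcl hx))
  have hcdΩ : ∀ x ∈ Ω, ContDiffAt ℝ 4 u x := fun x hx => hcd x (subset_closure hx)
  have hge : ∀ x ∈ Ω, 2 * (∑ k, ∑ l, (hess u x k k * hess u x l l - hess u x k l * hess u x k l)
      - (n : ℝ) * (n - 1)) ≤ ellOp (hess u x)⁻¹ (psiFn u) x := fun x hx =>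
    ellOp_psi_ge (hcdΩ x hx)
      (Filter.eventually_of_mem (hΩo.mem_nhds hx) hpos)
      (Filter.eventually_of_mem (hΩo.mem_nhds hx) hMA)
  have hpsd : ∀ x ∈ Ω, (hess u x)⁻¹.PosSemidef := fun x hx => (hpos x hx).inv.posSemidef
  -- `Lψ ≤ 0` at a maximum point, which forces equality in Maclaurin's inequality.
  have hone : ∀ x ∈ Ω, psiFn u x = psiFn u z → hess u x = 1 := by
    intro x hx hxz
    have hloc : IsLocalMax (psiFn u) x := by
      filter_upwards [hΩo.mem_nhds hx] with y hy
      rw [hxz]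
      exact hzmax y (subset_closure hy)
    have h1 := ellOp_nonpos_of_isLocalMax (hpsd x hx) (psiFn_contDiffAt (hcdΩ x hx)) hloc
    refine eq_one_of_sigma_two_le hn (hpos x hx) (hMA x hx) ?_
    linarith [hge x hx]
  have hcont : ∀ x ∈ Ω, ContinuousAt (fun y => (hess u y)⁻¹) x := by
    intro x hx
    have hh : ContinuousAt (hess u) x := by
      refine continuousAt_pi.2 fun i => continuousAt_pi.2 fun j => ?_
      exact (pd_contDiffAt (a := 3) (b := 2) (pd_contDiffAt (hcdΩ x hx) (by norm_num) j)
        (by norm_num) i).continuousAt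
    have hadj : ContinuousAt (fun y => (hess u y).adjugate) x :=
      (Continuous.matrix_adjugate continuous_id).continuousAt.comp hh
    refine hadj.congr ?_
    filter_upwards [hΩo.mem_nhds hx] with y hy
    simp [Matrix.inv_def, hMA y hy]
  have hconst := strong_max hn0 hΩo hΩc.isPreconnected
    (fun x hx => psiFn_contDiffAt (hcdΩ x hx)) hcont hpsd
    (fun x hx => by linarith [hge x hx, sigma_two_ge (hpos x hx) (hMA x hx)])
    (fun x hx => hzmax x (subset_closure hx))
    (fun x hx h => by simp [hone x hx h]) hzΩ rfl
  obtain ⟨x₀, c, hpar⟩ := exists_paraboloid hΩo hΩc.isPreconnected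
    (fun x hx => (hcdΩ x hx).of_le (by norm_num)) (fun x hx => hone x hx (hconst x hx))
  have hcl : Set.EqOn u (fun x => (1 / 2) * ‖x - x₀‖ ^ 2 + c) (closure Ω) :=
    Set.EqOn.of_subset_closure (s := Ω) hpar
      (fun x hx => (hcd x hx).continuousAt.continuousWithinAt) (by fun_prop)
      subset_closure subset_rfl
  obtain ⟨r, hr, hcr, hball⟩ := eq_ball_of_frontier hn0 hΩo hΩb ⟨z, hzΩ⟩ (x₀ := x₀) (c := c)
    (fun x hx => by rw [← hbd x hx, hcl (frontier_subset_closure hx)])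
  refine ⟨x₀, r, hr, fun x hx => ?_, hball⟩
  rw [hpar x hx, hcr]
  ring
end

section
/- Let n = 2, let Ω ⊂ ℝ² be a bounded open convex domain, and let u be a function of class C⁴ on a neighborhood of the closure of Ω that is strictly convex (its Hessian D²u is positive definite) and satisfies det D²u = 1 in Ω together with u = 0 on ∂Ω. If the function ψ = Σ_{k,l=1}^2 b^{kl} u_k u_l − 2u, with b^{kl} = (Δu) δ_{kl} − u_{kl}, attains its maximum over the closure of Ω at an interior point of Ω, then all third partial derivatives of u vanish identically in Ω; consequently u is a quadratic polynomial and Ω = {u < 0} is an ellipse (the interior of an ellipse). -/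
/-!
Since `det D²u = 1`, the matrix `b^{kl}` is the inverse of the Hessian, and `ψ` equals
`c p² - 2 b p q + a q² - 2 u`, where `(p, q) = Du` and `[[a, b], [b, c]] = D²u`. The operator
`L = c ∂₀₀ - 2 b ∂₀₁ + a ∂₁₁` is the linearized Monge–Ampère operator. Differentiating the equation
once shows that `ψ_i` is quadratic in `Du` with third derivatives of `u` as coefficients;
differentiating it twice gives (`third_derivs_zero`)

  `a² L ψ = 2 (a t₁² - 2 b t₀ t₁ + c t₀²) (c p² - 2 b p q + a q²) ≥ 0`,

with `t₀ = u₀₀₀` and `t₁ = u₀₀₁`. The strong maximum principle (`strong_max`, proved by Hopf's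
barrier argument in `hopf_touching`) makes `ψ` constant once it has an interior maximum, so `L ψ = 0`
and the third derivatives vanish wherever `Du ≠ 0`. They vanish everywhere since `Du` is not zero on
any open set.

Hence `u` is a quadratic polynomial on `Ω` (`quadratic_of_third`). After completing the square, the
frontier of `Ω` lies on a level curve of a positive definite form; as `Ω` is open, bounded and
nonempty, it is the region enclosed by that ellipse (`ellipse_of_frontier`).
-/

open scoped BigOperators

section Calculus

open Filter Topology

/-- The plane. -/
local notation "E2" => EuclideanSpace ℝ (Fin 2)

/-- `f` is differentiable at `x` and its `i`-th partial derivative there is `f'`. Full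
differentiability is required, so that sums and products obey the usual rules. -/
def HasPd (i : Fin 2) (f : E2 → ℝ) (f' : ℝ) (x : E2) : Prop :=
  DifferentiableAt ℝ f x ∧ pd i f x = f'

namespace HasPd

variable {i : Fin 2} {f g : E2 → ℝ} {f' g' : ℝ} {x : E2}

theorem add (hf : HasPd i f f' x) (hg : HasPd i g g' x) :
    HasPd i (fun y => f y + g y) (f' + g') x := by
  refine ⟨hf.1.fun_add hg.1, ?_⟩
  rw [← hf.2, ← hg.2]
  simp [pd, fderiv_fun_add hf.1 hg.1]

theorem sub (hf : HasPd i f f' x) (hg : HasPd i g g' x) :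
    HasPd i (fun y => f y - g y) (f' - g') x := by
  refine ⟨hf.1.fun_sub hg.1, ?_⟩
  rw [← hf.2, ← hg.2]
  simp [pd, fderiv_fun_sub hf.1 hg.1]

theorem mul (hf : HasPd i f f' x) (hg : HasPd i g g' x) :
    HasPd i (fun y => f y * g y) (f' * g x + f x * g') x := by
  refine ⟨hf.1.fun_mul hg.1, ?_⟩
  rw [← hf.2, ← hg.2]
  simp [pd, fderiv_fun_mul hf.1 hg.1]
  ring

theorem const_mul (r : ℝ) (hf : HasPd i f f' x) :
    HasPd i (fun y => r * f y) (r * f') x := by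
  refine ⟨hf.1.const_mul r, ?_⟩
  rw [← hf.2]
  simp [pd, fderiv_const_mul hf.1]

theorem exp (hf : HasPd i f f' x) :
    HasPd i (fun y => Real.exp (f y)) (Real.exp (f x) * f') x := by
  refine ⟨hf.1.exp, ?_⟩
  rw [← hf.2]
  simp [pd, fderiv_exp hf.1]

theorem const (r : ℝ) : HasPd i (fun _ => r) 0 x := by
  refine ⟨differentiableAt_const r, ?_⟩
  simp [pd]

theorem coord (j : Fin 2) : HasPd i (fun y => y j) (if j = i then 1 else 0) x := by
  have h : HasFDerivAt (fun y : E2 => y j)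
      (EuclideanSpace.proj j : E2 →L[ℝ] ℝ) x :=
    (EuclideanSpace.proj j : E2 →L[ℝ] ℝ).hasFDerivAt
  refine ⟨h.differentiableAt, ?_⟩
  simp [pd, h.fderiv]

theorem congr (hf : HasPd i f f' x) (h : g =ᶠ[𝓝 x] f) : HasPd i g f' x := by
  refine ⟨h.differentiableAt_iff.2 hf.1, ?_⟩
  rw [← hf.2, pd, pd, h.fderiv_eq]

theorem unique (hf : HasPd i f f' x) (hg : HasPd i f g' x) : f' = g' := hf.2.symm.trans hg.2

end HasPd

theorem pd_contDiffOn {Ω : Set E2} (hΩ : IsOpen Ω) {f : E2 → ℝ} {m n : WithTop ℕ∞}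
    (hf : ContDiffOn ℝ n f Ω) (hmn : m + 1 ≤ n) (i : Fin 2) : ContDiffOn ℝ m (pd i f) Ω :=
  (hf.fderiv_of_isOpen hΩ hmn).clm_apply contDiffOn_const

theorem hasPd_of_contDiffOn {Ω : Set E2} (hΩ : IsOpen Ω) {f : E2 → ℝ}
    (hf : ContDiffOn ℝ 1 f Ω) {x : E2} (hx : x ∈ Ω) (i : Fin 2) : HasPd i f (pd i f x) x :=
  ⟨(hf.contDiffAt (hΩ.mem_nhds hx)).differentiableAt (by norm_num), rfl⟩

theorem pd_comm_s6 {Ω : Set E2} (hΩ : IsOpen Ω) {f : E2 → ℝ}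
    (hf : ContDiffOn ℝ 2 f Ω) {x : E2} (hx : x ∈ Ω) (i j : Fin 2) :
    pd i (pd j f) x = pd j (pd i f) x := by
  have hc := hf.contDiffAt (hΩ.mem_nhds hx)
  have hd : DifferentiableAt ℝ (fderiv ℝ f) x :=
    (hc.fderiv_right (m := 1) (by norm_num)).differentiableAt (by norm_num)
  have key : ∀ k l : Fin 2, pd k (pd l f) x =
      fderiv ℝ (fderiv ℝ f) x (EuclideanSpace.single k 1) (EuclideanSpace.single l 1) := by
    intro k l
    have : fderiv ℝ (pd l f) x = _ :=
      fderiv_clm_apply hd (differentiableAt_const (EuclideanSpace.single l (1 : ℝ)))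
    rw [pd, this]
    simp
  rw [key, key]
  exact (hc.isSymmSndFDerivAt (by simp)).eq _ _

theorem fderiv_eq_pd (f : E2 → ℝ) (x v : E2) :
    fderiv ℝ f x v = v 0 * pd 0 f x + v 1 * pd 1 f x := by
  have : v = v 0 • EuclideanSpace.single 0 (1 : ℝ) + v 1 • EuclideanSpace.single 1 (1 : ℝ) := by
    ext k; fin_cases k <;> simp
  conv_lhs => rw [this]
  simp only [map_add, map_smul, smul_eq_mul, pd]

/-! ### Second-order conditions at a maximum -/

/-- Second-order necessary condition for a local maximum, in the direction `v`. If the second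
derivative along the line were positive, the point would also be a local minimum, so the function
would be constant near it on that line. -/
theorem snd_deriv_nonpos {g : E2 → ℝ} {x : E2} (hg : ContDiffAt ℝ 2 g x)
    (hmax : IsLocalMax g x) (v : E2) : fderiv ℝ (fun y => fderiv ℝ g y v) x v ≤ 0 := by
  by_contra! hpos
  set φ : ℝ → ℝ := fun t => g (x + t • v) with hφ
  have hline : ∀ t : ℝ, HasDerivAt (fun t : ℝ => x + t • v) v t := fun t => by
    simpa using ((hasDerivAt_id t).smul_const v).const_add x
  have hl0 : x + (0 : ℝ) • v = x := by simp
  have htend : Tendsto (fun t : ℝ => x + t • v) (𝓝 0) (𝓝 x) := by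
    have := (hline 0).continuousAt.tendsto
    rwa [hl0] at this
  have hdiff : ∀ᶠ y in 𝓝 x, DifferentiableAt ℝ g y := by
    filter_upwards [hg.eventually (by simp)] with y hy
    exact hy.differentiableAt (by norm_num)
  have hd1 : ∀ᶠ t in 𝓝 (0 : ℝ), HasDerivAt φ (fderiv ℝ g (x + t • v) v) t := by
    filter_upwards [htend.eventually hdiff] with t ht
    exact ht.hasFDerivAt.comp_hasDerivAt t (hline t)
  have hde : deriv φ =ᶠ[𝓝 0] fun t => fderiv ℝ g (x + t • v) v := by
    filter_upwards [hd1] with t ht using ht.deriv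
  have hG : DifferentiableAt ℝ (fun y => fderiv ℝ g y v) x :=
    ((hg.fderiv_right (m := 1) (by norm_num)).differentiableAt (by norm_num)).clm_apply
      (differentiableAt_const v)
  have hd2 : HasDerivAt (fun t : ℝ => fderiv ℝ g (x + t • v) v)
      (fderiv ℝ (fun y => fderiv ℝ g y v) x v) 0 := by
    have h1 : HasFDerivAt (fun y => fderiv ℝ g y v) (fderiv ℝ (fun y => fderiv ℝ g y v) x)
      (x + (0 : ℝ) • v) := by rw [hl0]; exact hG.hasFDerivAt
    exact h1.comp_hasDerivAt 0 (hline 0)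
  have hdd : deriv (deriv φ) 0 = fderiv ℝ (fun y => fderiv ℝ g y v) x v := by
    rw [hde.deriv_eq, hd2.deriv]
  have hφmax : IsLocalMax φ 0 := by
    have := htend.eventually hmax
    simpa [IsLocalMax, IsMaxFilter, hφ] using this
  have hφmin : IsLocalMin φ 0 :=
    isLocalMin_of_deriv_deriv_pos (by rw [hdd]; exact hpos) hφmax.deriv_eq_zero
      hd1.self_of_nhds.continuousAt
  have hconst : φ =ᶠ[𝓝 0] fun _ => φ 0 := by
    filter_upwards [hφmax, hφmin] with t h1 h2 using le_antisymm h1 h2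
  have h0 : deriv φ =ᶠ[𝓝 0] fun _ => 0 := by
    filter_upwards [hconst.eventuallyEq_nhds] with t ht
    rw [ht.deriv_eq]; simp
  have : deriv (deriv φ) 0 = 0 := by rw [h0.deriv_eq]; simp
  rw [hdd] at this
  exact hpos.ne' this

/-- At a local maximum, the elliptic operator whose coefficient matrix is the cofactor matrix
of `[[a, b], [b, c]]` takes a nonpositive value: `c` times the operator is the sum of the second
derivatives in the directions `(c, -b)` and `(0, 1)`. -/
theorem ell_nonpos_of_max {Ω : Set E2} (hΩ : IsOpen Ω) {g : E2 → ℝ} {x : E2}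
    (hg : ContDiffOn ℝ 2 g Ω) (hx : x ∈ Ω) (hmax : IsLocalMax g x) {a b c : ℝ} (hc : 0 < c)
    (hdet : a * c - b ^ 2 = 1) :
    c * pd 0 (pd 0 g) x - 2 * b * pd 0 (pd 1 g) x + a * pd 1 (pd 1 g) x ≤ 0 := by
  have hgx := hg.contDiffAt (hΩ.mem_nhds hx)
  have h1 : ∀ i, HasPd i (pd 0 g) (pd i (pd 0 g) x) x :=
    hasPd_of_contDiffOn hΩ (pd_contDiffOn hΩ hg (by norm_num) 0) hx
  have h2 : ∀ i, HasPd i (pd 1 g) (pd i (pd 1 g) x) x :=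
    hasPd_of_contDiffOn hΩ (pd_contDiffOn hΩ hg (by norm_num) 1) hx
  have key : ∀ v : E2, v 0 ^ 2 * pd 0 (pd 0 g) x + 2 * (v 0 * v 1) * pd 0 (pd 1 g) x
      + v 1 ^ 2 * pd 1 (pd 1 g) x ≤ 0 := by
    intro v
    have h := snd_deriv_nonpos hgx hmax v
    have e : (fun y => fderiv ℝ g y v) = fun y => v 0 * pd 0 g y + v 1 * pd 1 g y := by
      funext y; exact fderiv_eq_pd g y v
    rw [e, fderiv_eq_pd, (((h1 0).const_mul (v 0)).add ((h2 0).const_mul (v 1))).2,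
      (((h1 1).const_mul (v 0)).add ((h2 1).const_mul (v 1))).2,
      pd_comm_s6 hΩ hg hx 1 0] at h
    linarith
  have k1 := key !₂[c, -b]
  have k2 := key !₂[0, 1]
  simp at k1 k2
  have : c * (c * pd 0 (pd 0 g) x - 2 * b * pd 0 (pd 1 g) x + a * pd 1 (pd 1 g) x) ≤ 0 := by
    have : c * a * pd 1 (pd 1 g) x = b ^ 2 * pd 1 (pd 1 g) x + pd 1 (pd 1 g) x := by
      linear_combination (pd 1 (pd 1 g) x) * hdet
    nlinarith
  by_contra! hh
  nlinarith [mul_pos hc hh]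


/-! ### The strong maximum principle -/

theorem dist_sq_plane (x y : E2) : dist x y ^ 2 = (x 0 - y 0) ^ 2 + (x 1 - y 1) ^ 2 := by
  rw [EuclideanSpace.dist_eq, Real.sq_sqrt (by positivity)]
  simp [Real.dist_eq, sq_abs]

/-- First derivatives of the Hopf barrier `exp (-α |x - y|²)`. -/
theorem barrier_hasPd (α : ℝ) (y x : E2) (i : Fin 2) :
    HasPd i (fun x : E2 => Real.exp (-α * ((x 0 - y 0) * (x 0 - y 0) + (x 1 - y 1) * (x 1 - y 1))))
      (-2 * α * (x i - y i) *
        Real.exp (-α * ((x 0 - y 0) * (x 0 - y 0) + (x 1 - y 1) * (x 1 - y 1)))) x := by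
  have h0 : HasPd i (fun x : E2 => x 0 - y 0) _ x := (HasPd.coord 0).sub (HasPd.const (y 0))
  have h1 : HasPd i (fun x : E2 => x 1 - y 1) _ x := (HasPd.coord 1).sub (HasPd.const (y 1))
  have h := (((h0.mul h0).add (h1.mul h1)).const_mul (-α)).exp
  refine ⟨h.1, h.2.trans ?_⟩
  fin_cases i <;> simp <;> ring

/-- Second derivatives of the Hopf barrier `exp (-α |x - y|²)`. -/
theorem barrier_snd (α : ℝ) (y x : E2) (i j : Fin 2) :
    HasPd j (fun x : E2 => -2 * α * (x i - y i) *
        Real.exp (-α * ((x 0 - y 0) * (x 0 - y 0) + (x 1 - y 1) * (x 1 - y 1))))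
      ((4 * α ^ 2 * (x i - y i) * (x j - y j) - 2 * α * (if i = j then 1 else 0)) *
        Real.exp (-α * ((x 0 - y 0) * (x 0 - y 0) + (x 1 - y 1) * (x 1 - y 1)))) x := by
  have h := ((((HasPd.coord (i := j) (x := x) i).sub (HasPd.const (y i))).const_mul (-2 * α)).mul
    (barrier_hasPd α y x j))
  refine ⟨h.1, h.2.trans ?_⟩
  ring

/-- Hopf's argument. A subsolution `f ≤ M` cannot equal `M` at a point `x₀` of a circle
around `y` while being smaller than `M` at all other points of the closed disk. Otherwise, adding a
small multiple of the barrier `exp (-α |x - y|²)` produces a strict subsolution with an interior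
maximum in a small disk around `x₀`. -/
theorem hopf_touching {Ω : Set E2} (hΩ : IsOpen Ω) {f a b c : E2 → ℝ} {M : ℝ}
    (hf : ContDiffOn ℝ 2 f Ω)
    (ha : ContinuousOn a Ω) (hc : ContinuousOn c Ω) (hcpos : ∀ x ∈ Ω, 0 < c x)
    (hdet : ∀ x ∈ Ω, a x * c x - b x ^ 2 = 1)
    (hL : ∀ x ∈ Ω, 0 ≤ c x * pd 0 (pd 0 f) x - 2 * b x * pd 0 (pd 1 f) x + a x * pd 1 (pd 1 f) x)
    (hM : ∀ x ∈ Ω, f x ≤ M) {x₀ y : E2} (hx₀ : x₀ ∈ Ω) (hfx₀ : f x₀ = M) (hr : 0 < dist x₀ y)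
    (hlt : ∀ x ∈ Ω, dist x y ≤ dist x₀ y → x ≠ x₀ → f x < M) : False := by
  set r := dist x₀ y with hrdef
  obtain ⟨ρ₀, hρ₀, hball₀⟩ := Metric.isOpen_iff.1 hΩ x₀ hx₀
  obtain ⟨ρ, hρ, hρr, hball⟩ : ∃ ρ : ℝ, 0 < ρ ∧ ρ < r ∧ Metric.closedBall x₀ ρ ⊆ Ω := by
    have hm : 0 < min ρ₀ r := lt_min hρ₀ hr
    refine ⟨min ρ₀ r / 2, by positivity, ?_, ?_⟩
    · have := min_le_right ρ₀ r; linarith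
    · refine (Metric.closedBall_subset_ball ?_).trans hball₀
      have := min_le_left ρ₀ r; linarith
  have hK : IsCompact (Metric.closedBall x₀ ρ) := isCompact_closedBall x₀ ρ
  obtain ⟨T, hT⟩ : ∃ T, ∀ x ∈ Metric.closedBall x₀ ρ, a x + c x ≤ T := by
    obtain ⟨T, hT⟩ := hK.bddAbove_image ((ha.add hc).mono hball)
    exact ⟨T, fun x hx => hT ⟨x, hx, rfl⟩⟩
  have hapos : ∀ x ∈ Ω, 0 < a x := fun x hx => by
    have h1 := hcpos x hx
    have h2 := hdet x hx
    by_contra! h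
    nlinarith [sq_nonneg (b x), mul_nonneg h1.le (neg_nonneg.2 h)]
  have hTpos : 0 < T := by
    have := hT x₀ (Metric.mem_closedBall_self hρ.le)
    linarith [hapos x₀ hx₀, hcpos x₀ hx₀]
  obtain ⟨δ, hδ, hδle⟩ : ∃ δ, 0 < δ ∧
      ∀ x ∈ Metric.sphere x₀ ρ ∩ Metric.closedBall y r, δ ≤ M - f x := by
    have hcomp : IsCompact (Metric.sphere x₀ ρ ∩ Metric.closedBall y r) :=
      (isCompact_sphere x₀ ρ).inter_right Metric.isClosed_closedBall
    refine hcomp.exists_forall_le' (f := fun x => M - f x) (a := 0) ?_ ?_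
    · exact (continuousOn_const.sub hf.continuousOn).mono
        fun x hx => hball (Metric.sphere_subset_closedBall hx.1)
    · rintro x ⟨hxs, hxy⟩
      have hne : x ≠ x₀ := by
        rintro rfl
        simp at hxs
        exact hρ.ne hxs
      have := hlt x (hball (Metric.sphere_subset_closedBall hxs)) hxy hne
      linarith
  -- `α` is large enough for the barrier to be a strict subsolution on the small disk.
  set α : ℝ := (T ^ 2 + 1) / (r - ρ) ^ 2 with hα
  have hrρ : 0 < r - ρ := by linarith
  have hαpos : 0 < α := by positivity
  have hαeq : α * (r - ρ) ^ 2 = T ^ 2 + 1 := by rw [hα]; field_simp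
  set w : E2 → ℝ := fun x =>
    Real.exp (-α * ((x 0 - y 0) * (x 0 - y 0) + (x 1 - y 1) * (x 1 - y 1))) with hw
  have hwd : ∀ x, w x = Real.exp (-α * dist x y ^ 2) := fun x => by
    rw [dist_sq_plane, hw]; ring_nf
  have hwsm : ContDiff ℝ 2 w := by
    have h0 : ∀ j : Fin 2, ContDiff ℝ 2 (fun x : E2 => x j) := fun j =>
      (EuclideanSpace.proj j : E2 →L[ℝ] ℝ).contDiff
    exact (contDiff_const.mul ((((h0 0).sub contDiff_const).mul ((h0 0).sub contDiff_const)).add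
      (((h0 1).sub contDiff_const).mul ((h0 1).sub contDiff_const)))).exp
  have hw1 : ∀ i, pd i w = fun x => -2 * α * (x i - y i) * w x := fun i => by
    funext x; exact (barrier_hasPd α y x i).2
  have hw2 : ∀ i j x, pd j (pd i w) x =
      (4 * α ^ 2 * (x i - y i) * (x j - y j) - 2 * α * (if i = j then 1 else 0)) * w x := by
    intro i j x
    rw [hw1 i]
    exact (barrier_snd α y x i j).2
  set ε : ℝ := δ / 2 with hε
  have hεpos : 0 < ε := by positivity
  set g : E2 → ℝ := fun x => f x + ε * w x with hg
  have hgsm : ContDiffOn ℝ 2 g Ω := hf.add (contDiffOn_const.mul hwsm.contDiffOn)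
  obtain ⟨x₁, hx₁K, hx₁max⟩ := hK.exists_isMaxOn ⟨x₀, Metric.mem_closedBall_self hρ.le⟩
    (hgsm.continuousOn.mono hball)
  have hx₁Ω := hball hx₁K
  have hge : M + ε * Real.exp (-α * r ^ 2) ≤ g x₁ := by
    have h : f x₀ + ε * w x₀ ≤ g x₁ := hx₁max (Metric.mem_closedBall_self hρ.le)
    rwa [hfx₀, hwd x₀] at h
  -- The maximum of `g` is not on the sphere: inside `closedBall y r` the gap `δ` wins,
  -- outside it the barrier is below its value at `x₀`.
  have hx₁ball : x₁ ∈ Metric.ball x₀ ρ := by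
    rcases (Metric.mem_closedBall.1 hx₁K).lt_or_eq with h | h
    · exact h
    exfalso
    by_cases hy : dist x₁ y ≤ r
    · have h1 := hδle x₁ ⟨h, hy⟩
      have h2 : w x₁ ≤ 1 := by
        rw [hwd]; apply Real.exp_le_one_iff.2; nlinarith [sq_nonneg (dist x₁ y)]
      have h3 : ε * w x₁ ≤ ε := by nlinarith
      have h4 : 0 < ε * Real.exp (-α * r ^ 2) := by positivity
      have h5 : g x₁ = f x₁ + ε * w x₁ := rfl
      linarith
    · push Not at hy
      have h1 := hM x₁ hx₁Ω
      have h2 : w x₁ < Real.exp (-α * r ^ 2) := by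
        rw [hwd]
        apply Real.exp_lt_exp.2
        have : r ^ 2 < dist x₁ y ^ 2 := by gcongr
        nlinarith
      have h3 : ε * w x₁ < ε * Real.exp (-α * r ^ 2) := by gcongr
      have h5 : g x₁ = f x₁ + ε * w x₁ := rfl
      linarith
  have hlocal : IsLocalMax g x₁ :=
    hx₁max.isLocalMax (Filter.mem_of_superset (Metric.isOpen_ball.mem_nhds hx₁ball)
      Metric.ball_subset_closedBall)
  have hell := ell_nonpos_of_max hΩ hgsm hx₁Ω hlocal (hcpos x₁ hx₁Ω) (hdet x₁ hx₁Ω)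
  have hg1 : ∀ i, ∀ x ∈ Ω, pd i g x = pd i f x + ε * pd i w x := by
    intro i x hx
    exact ((hasPd_of_contDiffOn hΩ (hf.of_le (by norm_num)) hx i).add
      ((hasPd_of_contDiffOn isOpen_univ (hwsm.of_le (by norm_num)).contDiffOn
        (Set.mem_univ x) i).const_mul ε)).2
  have hg2 : ∀ i j, pd j (pd i g) x₁ = pd j (pd i f) x₁ + ε * pd j (pd i w) x₁ := by
    intro i j
    have h1 := hasPd_of_contDiffOn hΩ (pd_contDiffOn hΩ hf (by norm_num) i) hx₁Ω j
    have h2 := hasPd_of_contDiffOn isOpen_univ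
      (pd_contDiffOn isOpen_univ hwsm.contDiffOn (m := 1) (by norm_num) i) (Set.mem_univ x₁) j
    refine ((h1.add (h2.const_mul ε)).congr ?_).2
    filter_upwards [hΩ.mem_nhds hx₁Ω] with x hx using hg1 i x hx
  rw [hg2, hg2, hg2, hw2, hw2, hw2] at hell
  have hLx := hL x₁ hx₁Ω
  simp only [if_true, if_neg (by decide : (1 : Fin 2) ≠ 0)] at hell
  have hTx := hT x₁ hx₁K
  have ha1 := hapos x₁ hx₁Ω
  have hc1 := hcpos x₁ hx₁Ω
  have hd1 := hdet x₁ hx₁Ω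
  have hdist : (r - ρ) ^ 2 ≤ (x₁ 0 - y 0) ^ 2 + (x₁ 1 - y 1) ^ 2 := by
    rw [← dist_sq_plane]
    have h1 := dist_triangle x₀ x₁ y
    have h2 := Metric.mem_ball'.1 hx₁ball
    have : r - ρ ≤ dist x₁ y := by linarith
    gcongr
  have hwpos : 0 < w x₁ := Real.exp_pos _
  generalize x₁ 0 - y 0 = p at *
  generalize x₁ 1 - y 1 = q at *
  generalize w x₁ = W at *
  generalize a x₁ = A at *
  generalize b x₁ = B at *
  generalize c x₁ = C at *
  -- Cayley–Hamilton with determinant one bounds the form below by `1 / trace`.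
  have hform : p ^ 2 + q ^ 2 ≤ (A + C) * (C * p ^ 2 - 2 * B * p * q + A * q ^ 2) := by
    have : (A + C) * (C * p ^ 2 - 2 * B * p * q + A * q ^ 2) =
        (C * p - B * q) ^ 2 + (A * q - B * p) ^ 2 + (p ^ 2 + q ^ 2) := by
      linear_combination (p ^ 2 + q ^ 2) * hd1
    nlinarith [sq_nonneg (C * p - B * q), sq_nonneg (A * q - B * p)]
  set F := C * p ^ 2 - 2 * B * p * q + A * q ^ 2 with hF
  have hS : 0 < A + C := by linarith
  have hFS : (A + C) * (A + C) < α * ((A + C) * F) := by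
    have h1 : α * (r - ρ) ^ 2 ≤ α * ((A + C) * F) := by
      apply mul_le_mul_of_nonneg_left (hdist.trans hform) hαpos.le
    nlinarith
  have hαF : A + C < α * F := by
    have : (A + C) * (A + C) < (A + C) * (α * F) := by linarith
    exact lt_of_mul_lt_mul_left this hS.le
  have hpos : 0 < ε * (W * (2 * α * (2 * (α * F) - (A + C)))) := by
    have : 0 < 2 * (α * F) - (A + C) := by linarith
    positivity
  have hsum : ε * (W * (2 * α * (2 * (α * F) - (A + C)))) =
      C * (ε * ((4 * α ^ 2 * p * p - 2 * α * 1) * W)) -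
      2 * B * (ε * ((4 * α ^ 2 * q * p - 2 * α * 0) * W)) +
      A * (ε * ((4 * α ^ 2 * q * q - 2 * α * 1) * W)) := by
    rw [hF]; ring
  linarith

/-- Strong maximum principle for the operator `c ∂₀₀ - 2 b ∂₀₁ + a ∂₁₁` with `a c - b² = 1`.
The set where the maximum is attained is open: a nearby point off it would be the centre of a disk
touching it, contrary to `hopf_touching`. -/
theorem strong_max_s6 {Ω : Set E2} (hΩ : IsOpen Ω) (hconn : IsPreconnected Ω) {f a b c : E2 → ℝ}
    (hf : ContDiffOn ℝ 2 f Ω)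
    (ha : ContinuousOn a Ω) (hc : ContinuousOn c Ω) (hcpos : ∀ x ∈ Ω, 0 < c x)
    (hdet : ∀ x ∈ Ω, a x * c x - b x ^ 2 = 1)
    (hL : ∀ x ∈ Ω, 0 ≤ c x * pd 0 (pd 0 f) x - 2 * b x * pd 0 (pd 1 f) x + a x * pd 1 (pd 1 f) x)
    {z : E2} (hz : z ∈ Ω) (hM : ∀ x ∈ Ω, f x ≤ f z) : ∀ x ∈ Ω, f x = f z := by
  have hclosed : IsOpen (Ω ∩ {x | f x = f z}ᶜ) :=
    hf.continuousOn.isOpen_inter_preimage hΩ (isOpen_compl_singleton (x := f z))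
  have hopen : IsOpen (Ω ∩ {x | f x = f z}) := by
    rw [Metric.isOpen_iff]
    rintro x₁ ⟨hx₁, hfx₁⟩
    obtain ⟨R, hR, hball⟩ := Metric.isOpen_iff.1 hΩ x₁ hx₁
    refine ⟨R / 4, by positivity, fun y hy => ?_⟩
    have hyΩ : y ∈ Ω := hball (Metric.ball_subset_ball (by linarith) hy)
    refine ⟨hyΩ, ?_⟩
    by_contra hne
    have hKsub : Metric.closedBall x₁ (R / 2) ⊆ Ω :=
      (Metric.closedBall_subset_ball (by linarith)).trans hball
    have hScomp : IsCompact (Metric.closedBall x₁ (R / 2) ∩ f ⁻¹' {f z}) := by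
      apply (isCompact_closedBall x₁ (R / 2)).of_isClosed_subset _ Set.inter_subset_left
      exact (hf.continuousOn.mono hKsub).preimage_isClosed_of_isClosed
        Metric.isClosed_closedBall isClosed_singleton
    have hx₁S : x₁ ∈ Metric.closedBall x₁ (R / 2) ∩ f ⁻¹' {f z} :=
      ⟨Metric.mem_closedBall_self (by positivity), hfx₁⟩
    obtain ⟨x₀, hx₀, hmin⟩ := hScomp.exists_isMinOn ⟨x₁, hx₁S⟩
      (f := fun x => dist x y) (by fun_prop)
    have hx₀y : dist x₀ y ≤ dist x₁ y := hmin hx₁S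
    have hyx₁ : dist y x₁ < R / 4 := hy
    have hx₁y : dist x₁ y < R / 4 := by rwa [dist_comm]
    have hr : 0 < dist x₀ y := by
      rw [dist_pos]; rintro rfl; exact hne hx₀.2
    have hin : ∀ x, dist x y < dist x₀ y → x ∈ Ω → f x < f z := by
      intro x hx hxΩ
      refine lt_of_le_of_ne (hM x hxΩ) fun h => ?_
      have hxS : x ∈ Metric.closedBall x₁ (R / 2) ∩ f ⁻¹' {f z} := by
        refine ⟨?_, h⟩
        rw [Metric.mem_closedBall]
        linarith [dist_triangle x y x₁]
      exact absurd (hmin hxS) (not_le.2 hx)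
    -- Shrinking to the ball with diameter `[y, x₀]` leaves `x₀` as the only contact point.
    set y' : E2 := !₂[(y 0 + x₀ 0) / 2, (y 1 + x₀ 1) / 2] with hy'
    have e0 : y' 0 = (y 0 + x₀ 0) / 2 := by simp [hy']
    have e1 : y' 1 = (y 1 + x₀ 1) / 2 := by simp [hy']
    have hr2 : 0 < (x₀ 0 - y 0) ^ 2 + (x₀ 1 - y 1) ^ 2 := by
      rw [← dist_sq_plane]; positivity
    refine hopf_touching hΩ hf ha hc hcpos hdet hL hM (hKsub hx₀.1) hx₀.2 (y := y') ?_ ?_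
    · have : 0 < dist x₀ y' ^ 2 := by
        rw [dist_sq_plane, e0, e1]; nlinarith
      exact dist_nonneg.lt_of_ne fun h => by simp [← h] at this
    · intro x hx hd hne'
      apply hin x _ hx
      have hd2 : dist x y' ^ 2 ≤ dist x₀ y' ^ 2 := by gcongr
      rw [dist_sq_plane, dist_sq_plane, e0, e1] at hd2
      have hpos : 0 < (x 0 - x₀ 0) ^ 2 + (x 1 - x₀ 1) ^ 2 := by
        rw [← dist_sq_plane]
        have := dist_pos.2 hne'
        positivity
      have : dist x y ^ 2 < dist x₀ y ^ 2 := by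
        rw [dist_sq_plane, dist_sq_plane]
        nlinarith
      exact lt_of_pow_lt_pow_left₀ 2 dist_nonneg this
  intro x hx
  by_contra hne
  obtain ⟨w, hw, hw1, hw2⟩ := hconn _ _ hopen hclosed
    (fun y hy => (em (f y = f z)).imp (fun h => ⟨hy, h⟩) (fun h => ⟨hy, h⟩))
    ⟨z, hz, hz, rfl⟩ ⟨x, hx, hx, hne⟩
  exact hw2.2 hw1.2


/-! ### Vanishing of the third derivatives -/

theorem form_nonneg {a b c : ℝ} (ha : 0 < a) (hdet : a * c - b * b = 1) (s t : ℝ) :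
    0 ≤ a * s ^ 2 - 2 * b * t * s + c * t ^ 2 := by
  have h : a * (a * s ^ 2 - 2 * b * t * s + c * t ^ 2) = (a * s - b * t) ^ 2 + t ^ 2 := by
    linear_combination t ^ 2 * hdet
  exact nonneg_of_mul_nonneg_right (h ▸ by positivity) ha

theorem form_zero {a b c : ℝ} (ha : 0 < a) (hdet : a * c - b * b = 1) {s t : ℝ}
    (h0 : a * s ^ 2 - 2 * b * t * s + c * t ^ 2 = 0) : s = 0 ∧ t = 0 := by
  have h : a * (a * s ^ 2 - 2 * b * t * s + c * t ^ 2) = (a * s - b * t) ^ 2 + t ^ 2 := by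
    linear_combination t ^ 2 * hdet
  rw [h0, mul_zero] at h
  have ht : t = 0 := by nlinarith [sq_nonneg (a * s - b * t), sq_nonneg t]
  have hs : a * s = 0 := by subst ht; nlinarith
  exact ⟨(mul_eq_zero.1 hs).resolve_left ha.ne', ht⟩

/-- The rigidity step: an interior maximum of `ψ` forces all third derivatives of `u` to
vanish. Here `p, q` are the first derivatives, `a, b, c` the second, and `t0, …, t3` the third
derivatives `u₀₀₀, u₀₀₁, u₀₁₁, u₁₁₁`. -/
theorem third_derivs_zero {Ω : Set E2} (hΩ : IsOpen Ω) (hconn : IsPreconnected Ω) {u : E2 → ℝ}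
    (hu : ContDiffOn ℝ 4 u Ω)
    (hpos : ∀ x ∈ Ω, 0 < pd 0 (pd 0 u) x ∧ 0 < pd 1 (pd 1 u) x)
    (hMA : ∀ x ∈ Ω, pd 0 (pd 0 u) x * pd 1 (pd 1 u) x - pd 0 (pd 1 u) x ^ 2 = 1)
    {z : E2} (hz : z ∈ Ω) (hmax : ∀ x ∈ Ω, psiFn u x ≤ psiFn u z) :
    ∀ x ∈ Ω, ∀ i j k : Fin 2, pd i (pd j (pd k u)) x = 0 := by
  set p := pd 0 u with hp
  set q := pd 1 u with hq
  set a := pd 0 p with ha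
  set b := pd 0 q with hb
  set c := pd 1 q with hc
  set t0 := pd 0 a with ht0
  set t1 := pd 1 a with ht1
  set t2 := pd 1 b with ht2
  set t3 := pd 1 c with ht3
  have cp : ContDiffOn ℝ 3 p Ω := pd_contDiffOn hΩ hu (by norm_num) 0
  have cq : ContDiffOn ℝ 3 q Ω := pd_contDiffOn hΩ hu (by norm_num) 1
  have ca : ContDiffOn ℝ 2 a Ω := pd_contDiffOn hΩ cp (by norm_num) 0
  have cb : ContDiffOn ℝ 2 b Ω := pd_contDiffOn hΩ cq (by norm_num) 0
  have cc : ContDiffOn ℝ 2 c Ω := pd_contDiffOn hΩ cq (by norm_num) 1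
  have c0 : ContDiffOn ℝ 1 t0 Ω := pd_contDiffOn hΩ ca (by norm_num) 0
  have c1 : ContDiffOn ℝ 1 t1 Ω := pd_contDiffOn hΩ ca (by norm_num) 1
  have c2 : ContDiffOn ℝ 1 t2 Ω := pd_contDiffOn hΩ cb (by norm_num) 1
  have c3 : ContDiffOn ℝ 1 t3 Ω := pd_contDiffOn hΩ cc (by norm_num) 1
  have ev : ∀ {f g : E2 → ℝ}, (∀ x ∈ Ω, f x = g x) → ∀ x ∈ Ω, f =ᶠ[𝓝 x] g := by
    intro f g h x hx
    filter_upwards [hΩ.mem_nhds hx] with y hy using h y hy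
  -- symmetry of the derivatives of orders two, three and four
  have s1 : ∀ x ∈ Ω, pd 1 p x = b x := fun x hx => pd_comm_s6 hΩ (hu.of_le (by norm_num)) hx 1 0
  have s2 : ∀ x ∈ Ω, pd 0 b x = t1 x := fun x hx => by
    have h := pd_comm_s6 hΩ (cp.of_le (by norm_num)) hx 1 0
    rw [ht1, ha, h, pd, pd, (ev s1 x hx).fderiv_eq]
  have s3 : ∀ x ∈ Ω, pd 0 c x = t2 x := fun x hx =>
    pd_comm_s6 hΩ (cq.of_le (by norm_num)) hx 0 1
  have s4 : ∀ x ∈ Ω, pd 0 t1 x = pd 1 t0 x := fun x hx => pd_comm_s6 hΩ ca hx 0 1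
  have s5 : ∀ x ∈ Ω, pd 0 t2 x = pd 1 t1 x := fun x hx => by
    have h := pd_comm_s6 hΩ cb hx 0 1
    rw [ht2, h, pd, pd, (ev s2 x hx).fderiv_eq]
  have s6 : ∀ x ∈ Ω, pd 0 t3 x = pd 1 t2 x := fun x hx => by
    have h := pd_comm_s6 hΩ cc hx 0 1
    rw [ht3, h, pd, pd, (ev s3 x hx).fderiv_eq]
  have du : ∀ x ∈ Ω, ∀ i, HasPd i u (pd i u x) x := fun x hx =>
    hasPd_of_contDiffOn hΩ (hu.of_le (by norm_num)) hx
  have dp : ∀ x ∈ Ω, ∀ i, HasPd i p (pd i p x) x := fun x hx =>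
    hasPd_of_contDiffOn hΩ (cp.of_le (by norm_num)) hx
  have dq : ∀ x ∈ Ω, ∀ i, HasPd i q (pd i q x) x := fun x hx =>
    hasPd_of_contDiffOn hΩ (cq.of_le (by norm_num)) hx
  have da : ∀ x ∈ Ω, ∀ i, HasPd i a (pd i a x) x := fun x hx =>
    hasPd_of_contDiffOn hΩ (ca.of_le (by norm_num)) hx
  have db : ∀ x ∈ Ω, ∀ i, HasPd i b (pd i b x) x := fun x hx =>
    hasPd_of_contDiffOn hΩ (cb.of_le (by norm_num)) hx
  have dc : ∀ x ∈ Ω, ∀ i, HasPd i c (pd i c x) x := fun x hx =>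
    hasPd_of_contDiffOn hΩ (cc.of_le (by norm_num)) hx
  have d0 : ∀ x ∈ Ω, ∀ i, HasPd i t0 (pd i t0 x) x := fun x hx => hasPd_of_contDiffOn hΩ c0 hx
  have d1 : ∀ x ∈ Ω, ∀ i, HasPd i t1 (pd i t1 x) x := fun x hx => hasPd_of_contDiffOn hΩ c1 hx
  have d2 : ∀ x ∈ Ω, ∀ i, HasPd i t2 (pd i t2 x) x := fun x hx => hasPd_of_contDiffOn hΩ c2 hx
  have d3 : ∀ x ∈ Ω, ∀ i, HasPd i t3 (pd i t3 x) x := fun x hx => hasPd_of_contDiffOn hΩ c3 hx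
  have zero_of : ∀ {f : E2 → ℝ} {r : ℝ}, (∀ x ∈ Ω, f x = r) → ∀ x ∈ Ω, ∀ {i f'},
      HasPd i f f' x → f' = 0 := by
    intro f r h x hx i f' hf
    exact hf.unique ((HasPd.const r).congr (ev h x hx))
  -- first derivatives of the Monge–Ampère equation (apolarity)
  have mMA : ∀ x ∈ Ω, a x * c x - b x * b x = 1 := fun x hx => by rw [← hMA x hx]; ring
  have A1 : ∀ x ∈ Ω, t0 x * c x + a x * t2 x - 2 * (b x * t1 x) = 0 := fun x hx => by
    have h := zero_of mMA x hx (((da x hx 0).mul (dc x hx 0)).sub ((db x hx 0).mul (db x hx 0)))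
    rw [s3 x hx, s2 x hx] at h
    linarith
  have A2 : ∀ x ∈ Ω, t1 x * c x + a x * t3 x - 2 * (b x * t2 x) = 0 := fun x hx => by
    have h := zero_of mMA x hx (((da x hx 1).mul (dc x hx 1)).sub ((db x hx 1).mul (db x hx 1)))
    linarith
  -- the second derivatives of the equation
  have F0 := fun x (hx : x ∈ Ω) => zero_of A1 x hx ((((d0 x hx 0).mul (dc x hx 0)).add
    ((da x hx 0).mul (d2 x hx 0))).sub (((db x hx 0).mul (d1 x hx 0)).const_mul 2))
  have F1 := fun x (hx : x ∈ Ω) => zero_of A1 x hx ((((d0 x hx 1).mul (dc x hx 1)).add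
    ((da x hx 1).mul (d2 x hx 1))).sub (((db x hx 1).mul (d1 x hx 1)).const_mul 2))
  have F2 := fun x (hx : x ∈ Ω) => zero_of A2 x hx ((((d1 x hx 1).mul (dc x hx 1)).add
    ((da x hx 1).mul (d3 x hx 1))).sub (((db x hx 1).mul (d2 x hx 1)).const_mul 2))
  set ψ := psiFn u with hψ
  have hψeq : ∀ x ∈ Ω, ψ x = c x * (p x * p x) - 2 * (b x * (p x * q x)) + a x * (q x * q x)
      - 2 * u x := by
    intro x hx
    have := s1 x hx
    simp only [hψ, psiFn, bMat, hess, Matrix.trace, Fin.sum_univ_two, Matrix.diag, Matrix.sub_apply,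
      Matrix.smul_apply, Matrix.one_apply, Matrix.of_apply, smul_eq_mul, ← hp, ← hq, ← ha, ← hb,
      ← hc, this]
    norm_num
    ring
  have cψ : ContDiffOn ℝ 2 ψ Ω := by
    have cp' := cp.of_le (m := 2) (by norm_num)
    have cq' := cq.of_le (m := 2) (by norm_num)
    exact ((((cc.mul (cp'.mul cp')).sub (contDiffOn_const.mul (cb.mul (cp'.mul cq')))).add
      (ca.mul (cq'.mul cq'))).sub (contDiffOn_const.mul (hu.of_le (by norm_num)))).congr hψeq
  have ψd : ∀ x ∈ Ω, ∀ i, HasPd i ψ _ x := fun x hx i =>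
    (((((dc x hx i).mul ((dp x hx i).mul (dp x hx i))).sub
      (((db x hx i).mul ((dp x hx i).mul (dq x hx i))).const_mul 2)).add
      ((da x hx i).mul ((dq x hx i).mul (dq x hx i)))).sub ((du x hx i).const_mul 2)).congr
      (ev hψeq x hx)
  have ψ0 : ∀ x ∈ Ω, pd 0 ψ x = t2 x * (p x * p x) - 2 * (t1 x * (p x * q x))
      + t0 x * (q x * q x) := fun x hx => by
    rw [(ψd x hx 0).2, s3 x hx, s2 x hx, ← hp, ← ha, ← hb]
    linear_combination (2 * p x) * mMA x hx
  have ψ1 : ∀ x ∈ Ω, pd 1 ψ x = t3 x * (p x * p x) - 2 * (t2 x * (p x * q x))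
      + t1 x * (q x * q x) := fun x hx => by
    rw [(ψd x hx 1).2, s1 x hx, ← hq, ← hc]
    linear_combination (2 * q x) * mMA x hx
  have ψ00 := fun x (hx : x ∈ Ω) => ((((d2 x hx 0).mul ((dp x hx 0).mul (dp x hx 0))).sub
    (((d1 x hx 0).mul ((dp x hx 0).mul (dq x hx 0))).const_mul 2)).add
      ((d0 x hx 0).mul ((dq x hx 0).mul (dq x hx 0)))).congr (ev ψ0 x hx)
  have ψ01 := fun i x (hx : x ∈ Ω) => ((((d3 x hx i).mul ((dp x hx i).mul (dp x hx i))).sub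
    (((d2 x hx i).mul ((dp x hx i).mul (dq x hx i))).const_mul 2)).add
      ((d1 x hx i).mul ((dq x hx i).mul (dq x hx i)))).congr (ev ψ1 x hx)
  -- Apolarity makes the Hessian covariant of the cubic form of third derivatives proportional to
  -- the cofactor form, with the nonnegative factor visible on the right-hand side.
  have hLψ : ∀ x ∈ Ω, a x ^ 2 * (c x * pd 0 (pd 0 ψ) x - 2 * b x * pd 0 (pd 1 ψ) x
      + a x * pd 1 (pd 1 ψ) x) = 2 * (a x * t1 x ^ 2 - 2 * b x * t0 x * t1 x + c x * t0 x ^ 2) *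
        (c x * p x ^ 2 - 2 * b x * p x * q x + a x * q x ^ 2) := by
    intro x hx
    rw [(ψ00 x hx).2, (ψ01 0 x hx).2, (ψ01 1 x hx).2]
    have f0 := F0 x hx
    have f1 := F1 x hx
    have f2 := F2 x hx
    have e1 := A1 x hx
    have e2 := A2 x hx
    have e0 := mMA x hx
    rw [← hc, ← ha, ← hb, s1 x hx, s4 x hx, s5 x hx, s6 x hx]
    rw [← ht0, s5 x hx, s3 x hx, s2 x hx, s4 x hx] at f0
    rw [← ht1, ← ht2, ← ht3] at f1 f2
    have h2 : a x * t2 x = 2 * b x * t1 x - c x * t0 x := by linear_combination e1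
    have h3 : a x ^ 2 * t3 x = 2 * b x * (2 * b x * t1 x - c x * t0 x) - c x * (a x * t1 x) := by
      linear_combination a x * e2 + 2 * b x * e1
    have g1 : a x ^ 2 * (t2 x ^ 2 - t1 x * t3 x) =
        c x * (a x * t1 x ^ 2 - 2 * b x * t0 x * t1 x + c x * t0 x ^ 2) := by
      linear_combination (a x * t2 x + 2 * b x * t1 x - c x * t0 x) * h2 - t1 x * h3
    have g2 : a x ^ 2 * (t1 x * t2 x - t0 x * t3 x) =
        2 * b x * (a x * t1 x ^ 2 - 2 * b x * t0 x * t1 x + c x * t0 x ^ 2) := by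
      linear_combination (a x * t1 x) * h2 - t0 x * h3
    have g3 : a x ^ 2 * (t1 x ^ 2 - t0 x * t2 x) =
        a x * (a x * t1 x ^ 2 - 2 * b x * t0 x * t1 x + c x * t0 x ^ 2) := by
      linear_combination (-a x * t0 x) * h2
    linear_combination a x ^ 2 * (p x ^ 2 * f2 - 2 * p x * q x * f1 + q x ^ 2 * f0
      - 2 * b x * p x * e2 + 2 * b x * q x * e1) + 2 * (p x ^ 2 * g1 - p x * q x * g2
      + q x ^ 2 * g3)
  have hL : ∀ x ∈ Ω, 0 ≤ c x * pd 0 (pd 0 ψ) x - 2 * b x * pd 0 (pd 1 ψ) x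
      + a x * pd 1 (pd 1 ψ) x := by
    intro x hx
    have h := hLψ x hx
    have hax := (hpos x hx).1
    have k1 := form_nonneg hax (mMA x hx) (t1 x) (t0 x)
    have k2 := form_nonneg hax (mMA x hx) (q x) (p x)
    refine nonneg_of_mul_nonneg_right (a := a x ^ 2) (h ▸ ?_) (by positivity)
    have := mul_nonneg k1 k2
    linarith
  have hconst := strong_max_s6 hΩ hconn cψ ca.continuousOn cc.continuousOn (fun x hx => (hpos x hx).2)
    hMA hL hz hmax
  have hz1 : ∀ i, ∀ x ∈ Ω, pd i ψ x = 0 := fun i x hx =>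
    ((HasPd.const (ψ z)).congr (ev hconst x hx)).2
  have hz2 : ∀ i j, ∀ x ∈ Ω, pd i (pd j ψ) x = 0 := fun i j x hx =>
    ((HasPd.const 0).congr (ev (hz1 j) x hx)).2
  have halt : ∀ x ∈ Ω, (t0 x = 0 ∧ t1 x = 0) ∨ p x = 0 := by
    intro x hx
    have h := hLψ x hx
    rw [hz2, hz2, hz2] at h <;> try exact hx
    have hax := (hpos x hx).1
    have hprod : (a x * t1 x ^ 2 - 2 * b x * t0 x * t1 x + c x * t0 x ^ 2) *
        (a x * q x ^ 2 - 2 * b x * p x * q x + c x * p x ^ 2) = 0 := by linarith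
    rcases mul_eq_zero.1 hprod with hprod | hprod
    · exact Or.inl (form_zero hax (mMA x hx) hprod).symm
    · exact Or.inr (form_zero hax (mMA x hx) hprod).2
  -- Where a third derivative is nonzero, `p` would vanish on a neighbourhood, against `a > 0`.
  have hopen : ∀ {s : E2 → ℝ}, ContinuousOn s Ω → (∀ x ∈ Ω, s x = 0 ∨ p x = 0) →
      ∀ x ∈ Ω, s x = 0 := by
    intro s hs hsp x hx
    by_contra hne
    have hev : p =ᶠ[𝓝 x] fun _ => 0 := by
      filter_upwards [hΩ.mem_nhds hx,
        (hs.continuousAt (hΩ.mem_nhds hx)).eventually_ne hne] with y hy hy'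
      exact (hsp y hy).resolve_left hy'
    exact (hpos x hx).1.ne' ((HasPd.const 0).congr hev).2
  have z0 : ∀ x ∈ Ω, t0 x = 0 :=
    hopen c0.continuousOn fun x hx => (halt x hx).imp_left And.left
  have z1 : ∀ x ∈ Ω, t1 x = 0 :=
    hopen c1.continuousOn fun x hx => (halt x hx).imp_left And.right
  have z2 : ∀ x ∈ Ω, t2 x = 0 := fun x hx => by
    have h := A1 x hx
    rw [z0 x hx, z1 x hx] at h
    have hax := (hpos x hx).1.ne'
    simpa [hax] using h
  have z3 : ∀ x ∈ Ω, t3 x = 0 := fun x hx => by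
    have h := A2 x hx
    rw [z1 x hx, z2 x hx] at h
    have hax := (hpos x hx).1.ne'
    simpa [hax] using h
  have s1' : ∀ i, ∀ x ∈ Ω, pd i (pd 1 p) x = pd i b x := fun i x hx => by
    rw [pd, pd, (ev s1 x hx).fderiv_eq]
  intro x hx i j k
  fin_cases i <;> fin_cases j <;> fin_cases k
  · exact z0 x hx
  · exact (s2 x hx).trans (z1 x hx)
  · exact (s1' 0 x hx).trans ((s2 x hx).trans (z1 x hx))
  · exact (s3 x hx).trans (z2 x hx)
  · exact z1 x hx
  · exact z2 x hx
  · exact (s1' 1 x hx).trans (z2 x hx)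
  · exact z3 x hx

/-! ### Quadratic functions and ellipses -/

/-- A connected set meeting an open set and its complement meets the frontier. -/
theorem frontier_meets {Ω S : Set E2} (hΩ : IsOpen Ω) (hS : IsPreconnected S)
    (h1 : (S ∩ Ω).Nonempty) (h2 : (S ∩ Ωᶜ).Nonempty) : (S ∩ frontier Ω).Nonempty := by
  by_contra hempty
  have hdisj : ∀ x ∈ S, x ∈ closure Ω → x ∈ Ω := fun x hx hcl => by
    by_contra hxΩ
    exact hempty ⟨x, hx, hcl, by rwa [hΩ.interior_eq]⟩
  obtain ⟨x, hxS, hx1, hx2⟩ := hS Ω (closure Ω)ᶜ hΩ isClosed_closure.isOpen_compl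
    (fun x hx => (em (x ∈ closure Ω)).imp (hdisj x hx) id) h1
    (h2.imp fun x hx => ⟨hx.1, fun hcl => hx.2 (hdisj x hx.1 hcl)⟩)
  exact hx2 (subset_closure hx1)

theorem eq_of_pd_zero {Ω : Set E2} (hΩ : IsOpen Ω) (hconn : IsPreconnected Ω) {f : E2 → ℝ}
    (h : ∀ x ∈ Ω, ∀ i, HasPd i f 0 x) {x z : E2} (hx : x ∈ Ω) (hz : z ∈ Ω) : f x = f z := by
  refine hΩ.is_const_of_fderiv_eq_zero hconn
    (fun y hy => (h y hy 0).1.differentiableWithinAt) (fun y hy => ?_) hx hz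
  ext v
  rw [fderiv_eq_pd, (h y hy 0).2, (h y hy 1).2]
  simp

theorem quadratic_of_third {Ω : Set E2} (hΩ : IsOpen Ω) (hconn : IsPreconnected Ω) {u : E2 → ℝ}
    (hu : ContDiffOn ℝ 3 u Ω)
    (h3 : ∀ x ∈ Ω, ∀ i j k : Fin 2, pd i (pd j (pd k u)) x = 0) {z : E2} (hz : z ∈ Ω) :
    ∃ β : Fin 2 → ℝ, ∃ γ : ℝ, ∀ x ∈ Ω, u x = (1 / 2) * (∑ i, ∑ j, hess u z i j * x i * x j)
      + (∑ i, β i * x i) + γ := by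
  have c1 : ∀ k, ContDiffOn ℝ 2 (pd k u) Ω := pd_contDiffOn hΩ hu (by norm_num)
  have c2 : ∀ j k, ContDiffOn ℝ 1 (pd j (pd k u)) Ω := fun j k =>
    pd_contDiffOn hΩ (c1 k) (by norm_num) j
  have hH : ∀ j k, ∀ x ∈ Ω, pd j (pd k u) x = pd j (pd k u) z := fun j k x hx =>
    eq_of_pd_zero hΩ hconn
      (fun y hy i => ⟨(hasPd_of_contDiffOn hΩ (c2 j k) hy i).1, h3 y hy i j k⟩) hx hz
  have hsym := pd_comm_s6 hΩ (hu.of_le (by norm_num)) hz 0 1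
  set A := fun j k => pd j (pd k u) z with hA
  have hG : ∀ k, ∀ x ∈ Ω, pd k u x - (A 0 k * x 0 + A 1 k * x 1) =
      pd k u z - (A 0 k * z 0 + A 1 k * z 1) := fun k x hx => by
    refine eq_of_pd_zero (f := fun x => pd k u x - (A 0 k * x 0 + A 1 k * x 1)) hΩ hconn
      (fun y hy i => ?_) hx hz
    have h := (hasPd_of_contDiffOn hΩ ((c1 k).of_le (by norm_num)) hy i).sub
      (((HasPd.coord 0).const_mul (A 0 k)).add ((HasPd.coord 1).const_mul (A 1 k)))
    refine ⟨h.1, h.2.trans ?_⟩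
    rw [hH i k y hy]
    fin_cases i <;> simp [hA]
  set β : Fin 2 → ℝ := fun k => pd k u z - (A 0 k * z 0 + A 1 k * z 1) with hβ
  have hQ : ∀ x ∈ Ω, u x - (1 / 2 * (A 0 0 * (x 0 * x 0) + 2 * A 0 1 * (x 0 * x 1)
        + A 1 1 * (x 1 * x 1)) + (β 0 * x 0 + β 1 * x 1)) =
      u z - (1 / 2 * (A 0 0 * (z 0 * z 0) + 2 * A 0 1 * (z 0 * z 1)
        + A 1 1 * (z 1 * z 1)) + (β 0 * z 0 + β 1 * z 1)) := fun x hx => by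
    refine eq_of_pd_zero (f := fun x => u x - (1 / 2 * (A 0 0 * (x 0 * x 0)
      + 2 * A 0 1 * (x 0 * x 1) + A 1 1 * (x 1 * x 1)) + (β 0 * x 0 + β 1 * x 1))) hΩ hconn
      (fun y hy i => ?_) hx hz
    have k0 : HasPd i (fun x : E2 => x 0) _ y := HasPd.coord 0
    have k1 : HasPd i (fun x : E2 => x 1) _ y := HasPd.coord 1
    have h := (hasPd_of_contDiffOn hΩ (hu.of_le (by norm_num)) hy i).sub
      ((((((k0.mul k0).const_mul (A 0 0)).add ((k0.mul k1).const_mul (2 * A 0 1))).add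
        ((k1.mul k1).const_mul (A 1 1))).const_mul (1 / 2)).add
        ((k0.const_mul (β 0)).add (k1.const_mul (β 1))))
    refine ⟨h.1, h.2.trans ?_⟩
    have g := hG i y hy
    have hs : A 1 0 = A 0 1 := hsym.symm
    have hb : β i = pd i u z - (A 0 i * z 0 + A 1 i * z 1) := rfl
    rw [← hb] at g
    fin_cases i
    · simp at g ⊢
      rw [hs] at g
      linarith
    · simp at g ⊢
      linarith
  refine ⟨β, u z - (1 / 2 * (A 0 0 * (z 0 * z 0) + 2 * A 0 1 * (z 0 * z 1)
        + A 1 1 * (z 1 * z 1)) + (β 0 * z 0 + β 1 * z 1)), fun x hx => ?_⟩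
  rw [← hQ x hx]
  have hs : A 1 0 = A 0 1 := hsym.symm
  simp only [Fin.sum_univ_two, hess, Matrix.of_apply]
  change u x = 1 / 2 * (A 0 0 * x 0 * x 0 + A 0 1 * x 0 * x 1 + (A 1 0 * x 1 * x 0
    + A 1 1 * x 1 * x 1)) + (β 0 * x 0 + β 1 * x 1) + _
  rw [hs]
  ring

/-- A bounded nonempty open set whose frontier lies on a level curve of the positive definite
form `‖M (x - x₀)‖²` is the region enclosed by that curve. -/
theorem ellipse_of_frontier {Ω : Set E2} (hΩ : IsOpen Ω) (hb : Bornology.IsBounded Ω)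
    (hne : Ω.Nonempty) (M : E2 ≃ₗ[ℝ] E2) (x₀ : E2) (m : ℝ)
    (hfr : ∀ x ∈ frontier Ω, ‖M (x - x₀)‖ ^ 2 = m) :
    ∃ (L : E2 ≃ₗ[ℝ] E2) (v₀ : E2), Ω = (fun v => v₀ + L v) '' Metric.ball 0 1 := by
  have hMc : Continuous M := M.toLinearMap.continuous_of_finiteDimensional
  -- Rays from `x₀` along which the form exceeds `m` would make `Ω` unbounded.
  have hout : ∀ x ∈ Ω, ‖M (x - x₀)‖ ^ 2 ≤ m ∨ x = x₀ := by
    intro x hx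
    by_contra! h
    obtain ⟨hgt, hxne⟩ := h
    have hpos : 0 < ‖x - x₀‖ := norm_pos_iff.2 (sub_ne_zero.2 hxne)
    set ray : ℝ → E2 := fun t => x₀ + t • (x - x₀) with hray
    have hrc : Continuous ray := by fun_prop
    have hpre : IsPreconnected (ray '' Set.Ici 1) := isPreconnected_Ici.image _ hrc.continuousOn
    have hsub : ray '' Set.Ici 1 ⊆ Ω := by
      by_contra hns
      obtain ⟨y, hy, hyf⟩ : ((ray '' Set.Ici 1) ∩ frontier Ω).Nonempty := by
        refine frontier_meets hΩ hpre ?_ ?_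
        · exact ⟨x, ⟨1, Set.mem_Ici.2 le_rfl, by simp [hray]⟩, hx⟩
        · obtain ⟨y, hy1, hy2⟩ := Set.not_subset.1 hns
          exact ⟨y, hy1, hy2⟩
      obtain ⟨t, ht, rfl⟩ := hy
      have ht1 : 1 ≤ t := ht
      have h := hfr _ hyf
      simp only [hray, add_sub_cancel_left, map_smul, norm_smul, Real.norm_eq_abs, mul_pow,
        sq_abs] at h
      nlinarith [mul_nonneg (by nlinarith : 0 ≤ t ^ 2 - 1) (sq_nonneg ‖M (x - x₀)‖)]
    obtain ⟨R, hR⟩ := (Metric.isBounded_iff_subset_closedBall x₀).1 hb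
    have hmem := hR (hsub ⟨max 1 ((R + 1) / ‖x - x₀‖), Set.mem_Ici.2 (le_max_left _ _), rfl⟩)
    simp only [Metric.mem_closedBall, dist_eq_norm, hray, add_sub_cancel_left, norm_smul,
      Real.norm_eq_abs] at hmem
    have h1 := le_max_right 1 ((R + 1) / ‖x - x₀‖)
    have h2 := (le_abs_self _).trans' h1
    have h3 := mul_le_mul_of_nonneg_right h2 hpos.le
    rw [div_mul_cancel₀ _ hpos.ne'] at h3
    linarith
  have hmpos : 0 < m := by
    obtain ⟨x₁, hx₁, hx₁ne⟩ := (dense_compl_singleton x₀).inter_open_nonempty Ω hΩ hne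
    have hx₁ne : x₁ ≠ x₀ := hx₁ne
    have h := (hout x₁ hx₁).resolve_right hx₁ne
    have : 0 < ‖M (x₁ - x₀)‖ := by
      rw [norm_pos_iff]
      exact fun h0 => hx₁ne (sub_eq_zero.1 (M.map_eq_zero_iff.1 h0))
    nlinarith [sq_nonneg ‖M (x₁ - x₀)‖]
  have hin : ∀ x ∈ Ω, ‖M (x - x₀)‖ ^ 2 < m := by
    intro x hx
    rcases eq_or_ne x x₀ with rfl | hxne
    · simpa using hmpos
    have hcont : ContinuousAt (fun t : ℝ => x₀ + t • (x - x₀)) 1 := by fun_prop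
    have hmem : ∀ᶠ t in 𝓝 (1 : ℝ), x₀ + t • (x - x₀) ∈ Ω :=
      hcont.eventually_mem (hΩ.mem_nhds (by simpa using hx))
    obtain ⟨t, htΩ, ht⟩ := ((hmem.filter_mono nhdsWithin_le_nhds).and
      (self_mem_nhdsWithin (s := Set.Ioi (1 : ℝ)))).exists
    have ht1 : 1 < t := ht
    have hpos : 0 < ‖M (x - x₀)‖ := by
      rw [norm_pos_iff]
      exact fun h0 => hxne (sub_eq_zero.1 (M.map_eq_zero_iff.1 h0))
    have h := (hout _ htΩ).resolve_right (by
      simp [sub_ne_zero.2 hxne, (by linarith : t ≠ 0)])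
    simp only [add_sub_cancel_left, map_smul, norm_smul, Real.norm_eq_abs, mul_pow, sq_abs] at h
    nlinarith [mul_pos (by nlinarith : 0 < t ^ 2 - 1) (pow_pos hpos 2)]
  set s := Real.sqrt m with hs
  have hspos : 0 < s := Real.sqrt_pos.2 hmpos
  have hsm : s ^ 2 = m := Real.sq_sqrt hmpos.le
  set L : E2 ≃ₗ[ℝ] E2 := M.symm.trans (LinearEquiv.smulOfNeZero ℝ E2 s hspos.ne') with hL
  have hLv : ∀ v, L v = s • M.symm v := fun v => by simp [hL]
  have hML : ∀ v, M (L v) = s • v := fun v => by rw [hLv, map_smul, M.apply_symm_apply]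
  have hsub : Ω ⊆ (fun v => x₀ + L v) '' Metric.ball (0 : E2) 1 := by
    intro x hx
    refine ⟨L.symm (x - x₀), ?_, by simp⟩
    have h := hin x hx
    have e := hML (L.symm (x - x₀))
    rw [L.apply_symm_apply] at e
    rw [e, norm_smul, Real.norm_of_nonneg hspos.le, mul_pow, hsm] at h
    rw [mem_ball_zero_iff]
    have : ‖L.symm (x - x₀)‖ ^ 2 < 1 := by nlinarith
    exact (sq_lt_one_iff₀ (norm_nonneg _)).1 this
  refine ⟨L, x₀, Set.Subset.antisymm hsub ?_⟩
  · have hcL : Continuous L := L.toLinearMap.continuous_of_finiteDimensional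
    have hpre : IsPreconnected ((fun v => x₀ + L v) '' Metric.ball (0 : E2) 1) :=
      (convex_ball (0 : E2) 1).isPreconnected.image _ (by fun_prop)
    by_contra hns
    obtain ⟨y, hy, hyf⟩ :
        (((fun v => x₀ + L v) '' Metric.ball (0 : E2) 1) ∩ frontier Ω).Nonempty := by
      refine frontier_meets hΩ hpre ?_ ?_
      · obtain ⟨x, hx⟩ := hne
        exact ⟨x, hsub hx, hx⟩
      · obtain ⟨y, hy1, hy2⟩ := Set.not_subset.1 hns
        exact ⟨y, hy1, hy2⟩
    obtain ⟨v, hv, rfl⟩ := hy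
    have h := hfr _ hyf
    rw [add_sub_cancel_left, hML, norm_smul, Real.norm_of_nonneg hspos.le, mul_pow, hsm] at h
    have hv1 : ‖v‖ ^ 2 < 1 := (sq_lt_one_iff₀ (norm_nonneg _)).2 (mem_ball_zero_iff.1 hv)
    nlinarith

/-- A quadratic polynomial with positive definite Hessian of determinant one is, up to a factor
and an additive constant, the squared norm of an invertible affine map. -/
theorem exists_sq_completion {a b c : ℝ} (ha : 0 < a) (hdet : a * c - b ^ 2 = 1) (β : Fin 2 → ℝ)
    (γ : ℝ) : ∃ (M : E2 ≃ₗ[ℝ] E2) (x₀ : E2) (m : ℝ), ∀ x : E2,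
      ‖M (x - x₀)‖ ^ 2 = 2 * ((1 / 2) * (a * x 0 * x 0 + b * x 0 * x 1 + (b * x 1 * x 0
        + c * x 1 * x 1)) + (β 0 * x 0 + β 1 * x 1) + γ) + m := by
  set s := Real.sqrt a with hs
  have hspos : 0 < s := Real.sqrt_pos.2 ha
  have hsa : s ^ 2 = a := Real.sq_sqrt ha.le
  -- Cholesky factor of the Hessian
  let M : E2 ≃ₗ[ℝ] E2 :=
    { toFun := fun x => !₂[s * x 0 + b / s * x 1, x 1 / s]
      invFun := fun x => !₂[x 0 / s - b / s * x 1, s * x 1]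
      map_add' := fun x y => by
        ext k; fin_cases k <;> simp <;> ring
      map_smul' := fun r x => by
        ext k; fin_cases k <;> simp <;> ring
      left_inv := fun x => by
        ext k; fin_cases k <;> simp <;> field_simp; ring
      right_inv := fun x => by
        ext k; fin_cases k <;> simp <;> field_simp; ring }
  -- The centre is the critical point `-A⁻¹ β`.
  set x₀ : E2 := !₂[-(c * β 0 - b * β 1), -(a * β 1 - b * β 0)] with hx₀
  have e0 : x₀ 0 = -(c * β 0 - b * β 1) := by simp [hx₀]
  have e1 : x₀ 1 = -(a * β 1 - b * β 0) := by simp [hx₀]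
  have hM : ∀ y : E2, ‖M y‖ ^ 2 = a * y 0 ^ 2 + 2 * b * y 0 * y 1 + c * y 1 ^ 2 := by
    intro y
    have h : ‖M y‖ ^ 2 = (s * y 0 + b / s * y 1) ^ 2 + (y 1 / s) ^ 2 := by
      rw [EuclideanSpace.norm_sq_eq]
      simp [M]
    have hcc : c = (1 + b ^ 2) / s ^ 2 := by
      rw [hsa]; field_simp; linarith
    rw [h, hcc, ← hsa]
    field_simp
    ring
  refine ⟨M, x₀, a * x₀ 0 ^ 2 + 2 * b * x₀ 0 * x₀ 1 + c * x₀ 1 ^ 2 - 2 * γ, fun x => ?_⟩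
  rw [hM]
  simp only [PiLp.sub_apply]
  have g0 : a * x₀ 0 + b * x₀ 1 = -β 0 := by
    rw [e0, e1]; linear_combination (-β 0) * hdet
  have g1 : b * x₀ 0 + c * x₀ 1 = -β 1 := by
    rw [e0, e1]; linear_combination (-β 1) * hdet
  linear_combination (-2 * x 0) * g0 - 2 * x 1 * g1

end Calculus

/-- Rigidity for `n = 2`: if `ψ = Σ b^{kl} u_k u_l − 2u` attains its maximum at an
interior point, then all third derivatives of `u` vanish in `Ω`, `u` is a quadratic
polynomial, and `Ω` is (the interior of) an ellipse, i.e. the image of the open unit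
disk under an invertible affine map. -/
theorem psi_interior_max_rigidity_dim2
    (Ω U : Set (EuclideanSpace ℝ (Fin 2)))
    (hΩo : IsOpen Ω) (hΩc : Convex ℝ Ω) (hΩb : Bornology.IsBounded Ω)
    (hUo : IsOpen U) (hUcl : closure Ω ⊆ U)
    (u : EuclideanSpace ℝ (Fin 2) → ℝ)
    (hu : ContDiffOn ℝ 4 u U)
    (hpos : ∀ x ∈ Ω, (hess u x).PosDef)
    (hMA : ∀ x ∈ Ω, (hess u x).det = 1)
    (hbd : ∀ x ∈ frontier Ω, u x = 0)
    (hmax : ∃ z ∈ Ω, ∀ x ∈ closure Ω, psiFn u x ≤ psiFn u z) :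
    (∀ x ∈ Ω, ∀ i j k : Fin 2, pd i (pd j (pd k u)) x = 0) ∧
    (∃ (A : Matrix (Fin 2) (Fin 2) ℝ) (b : Fin 2 → ℝ) (c : ℝ),
      ∀ x ∈ Ω, u x = (1 / 2) * (∑ i, ∑ j, A i j * x i * x j) + (∑ i, b i * x i) + c) ∧
    (∃ (L : EuclideanSpace ℝ (Fin 2) ≃ₗ[ℝ] EuclideanSpace ℝ (Fin 2))
       (v₀ : EuclideanSpace ℝ (Fin 2)),
      Ω = (fun v => v₀ + L v) '' Metric.ball 0 1) := by
  obtain ⟨z, hz, hzmax⟩ := hmax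
  have hΩU : Ω ⊆ U := subset_closure.trans hUcl
  have huΩ : ContDiffOn ℝ 4 u Ω := hu.mono hΩU
  have hconn : IsPreconnected Ω := hΩc.isPreconnected
  have hsym : ∀ x ∈ Ω, pd 1 (pd 0 u) x = pd 0 (pd 1 u) x := fun x hx =>
    pd_comm_s6 hΩo (huΩ.of_le (by norm_num)) hx 1 0
  have hdiag : ∀ x ∈ Ω, 0 < pd 0 (pd 0 u) x ∧ 0 < pd 1 (pd 1 u) x := fun x hx =>
    ⟨by simpa [hess] using (hpos x hx).diag_pos (i := 0),
     by simpa [hess] using (hpos x hx).diag_pos (i := 1)⟩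
  have hdet : ∀ x ∈ Ω, pd 0 (pd 0 u) x * pd 1 (pd 1 u) x - pd 0 (pd 1 u) x ^ 2 = 1 := by
    intro x hx
    have h := hMA x hx
    rw [Matrix.det_fin_two] at h
    simp only [hess, Matrix.of_apply, hsym x hx] at h
    linarith
  have h3 := third_derivs_zero hΩo hconn huΩ hdiag hdet hz
    (fun x hx => hzmax x (subset_closure hx))
  obtain ⟨β, γ, hquad⟩ := quadratic_of_third hΩo hconn (huΩ.of_le (by norm_num)) h3 hz
  refine ⟨h3, ⟨hess u z, β, γ, hquad⟩, ?_⟩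
  obtain ⟨M, x₀, m, hM⟩ := exists_sq_completion (hdiag z hz).1 (hdet z hz) β γ
  have hquad' : ∀ x ∈ Ω, ‖M (x - x₀)‖ ^ 2 = 2 * u x + m := by
    intro x hx
    rw [hM, hquad x hx]
    simp only [Fin.sum_univ_two, hess, Matrix.of_apply, hsym z hz]
  have hMc : Continuous M := M.toLinearMap.continuous_of_finiteDimensional
  have hcl : ∀ x ∈ closure Ω, ‖M (x - x₀)‖ ^ 2 = 2 * u x + m := by
    have hquad'' : Set.EqOn (fun x => ‖M (x - x₀)‖ ^ 2) (fun x => 2 * u x + m) Ω := hquad'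
    refine hquad''.of_subset_closure (by fun_prop) ?_ subset_closure le_rfl
    exact (continuousOn_const.mul (hu.continuousOn.mono hUcl)).add continuousOn_const
  refine ellipse_of_frontier hΩo hΩb ⟨z, hz⟩ M x₀ m fun x hx => ?_
  rw [hcl x (frontier_subset_closure hx), hbd x hx]
  ring
end
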